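/- arXiv:1303.6030 — 2 statements merged into one kernel-verified Lean document; each statement's English description precedes it below -/
import Mathlib

section
/- Let K be an infinite field, S = K[x_1,...,x_n], and let I ⊆ S and J ⊆ S be homogeneous ideals. Then for a general change of coordinates g ∈ GL_n(K), one has H(I·g(J), d) ≥ H(Gin_lex(I)·Gin_oplex(J), d) for all d ≥ 0. -/
open MvPolynomial TensorProduct CategoryTheory

noncomputable section

/-- The polynomial ring `S = K[x_1,...,x_n]`, standard graded. -/
abbrev PS (K : Type) [Field K] (n : ℕ) : Type := MvPolynomial (Fin n) K

variable (K : Type) [Field K] (n : ℕ)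

/-- An ideal of `S` is homogeneous if it contains all homogeneous components of its
elements. -/
def IsHomog (I : Ideal (PS K n)) : Prop :=
  ∀ f ∈ I, ∀ d : ℕ, MvPolynomial.homogeneousComponent d f ∈ I

/-- The change of coordinates of `S` induced by `g ∈ GL_n(K)`, determined by
`g(x_i) = ∑_j g_{ji} x_j`. -/
def coordChange (g : GL (Fin n) K) : PS K n →ₐ[K] PS K n :=
  MvPolynomial.aeval (fun i => ∑ j, ((g : Matrix (Fin n) (Fin n) K) j i) • MvPolynomial.X j)

/-- A property `P` holds for a general change of coordinates `g ∈ GL_n(K)` if there is a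
nonempty Zariski open subset `U ⊆ GL_n(K)` on which it holds; equivalently (as `GL_n(K)` is
an irreducible variety over the infinite field `K`) there is a nonzero polynomial `F` in the
matrix entries such that `P g` holds whenever `F` does not vanish at `g`. -/
def generally (P : GL (Fin n) K → Prop) : Prop :=
  ∃ F : MvPolynomial (Fin n × Fin n) K, F ≠ 0 ∧
    ∀ g : GL (Fin n) K,
      MvPolynomial.eval (fun p => (g : Matrix (Fin n) (Fin n) K) p.1 p.2) F ≠ 0 → P g

/-- The Hilbert function: `H(I,d) = dim_K I_d`. -/
def hilb (I : Ideal (PS K n)) (d : ℕ) : ℕ :=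
  Module.finrank K ↥(Submodule.restrictScalars K I ⊓ homogeneousSubmodule (Fin n) K d)

/-- `a <_lex b` for the lexicographic order induced by `x_1 > x_2 > ⋯ > x_n`. -/
def lexLt (a b : Fin n →₀ ℕ) : Prop := Finsupp.Lex (· < ·) (· < ·) a b

/-- `a <_oplex b` for the (opposite) lexicographic order induced by `x_n > ⋯ > x_1`. -/
def oplexLt (a b : Fin n →₀ ℕ) : Prop := Finsupp.Lex (· > ·) (· < ·) a b

/-- The total degree of an exponent vector. -/
def expDeg (m : Fin n →₀ ℕ) : ℕ := ∑ i, m i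

/-- A monomial ideal: together with any polynomial it contains each of its monomials. -/
def IsMonomialIdeal (I : Ideal (PS K n)) : Prop :=
  ∀ f ∈ I, ∀ m ∈ f.support, MvPolynomial.monomial m (1 : K) ∈ I

/-- A lex ideal: a monomial ideal whose monomials form a lex set. -/
def IsLexIdeal (I : Ideal (PS K n)) : Prop :=
  IsMonomialIdeal K n I ∧ ∀ u v : Fin n →₀ ℕ, expDeg n u = expDeg n v →
    MvPolynomial.monomial u (1 : K) ∈ I → lexLt n u v →
      MvPolynomial.monomial v (1 : K) ∈ I

/-- An opposite lex ideal: a monomial ideal whose monomials form an opposite lex set. -/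
def IsOplexIdeal (I : Ideal (PS K n)) : Prop :=
  IsMonomialIdeal K n I ∧ ∀ u v : Fin n →₀ ℕ, expDeg n u = expDeg n v →
    MvPolynomial.monomial u (1 : K) ∈ I → oplexLt n u v →
      MvPolynomial.monomial v (1 : K) ∈ I

/-- The initial ideal `in_r(I)` of `I` with respect to a (strict) monomial order `r`:
the ideal generated by the `r`-maximal monomials of the nonzero elements of `I`. -/
def initialIdealO (r : (Fin n →₀ ℕ) → (Fin n →₀ ℕ) → Prop) (I : Ideal (PS K n)) :
    Ideal (PS K n) :=
  Ideal.span {g | ∃ f ∈ I, ∃ m ∈ f.support,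
    (∀ m' ∈ f.support, m' = m ∨ r m' m) ∧ g = MvPolynomial.monomial m (1 : K)}

/-!
Let `h₁` and `h₂` compute the generic initial ideals of `I` and `J`. Changing coordinates by `h₁` in
the whole product and replacing `I`, `J` by `h₁(I)`, `h₂(J)`, it suffices to compare `in(I) * in(J)`
with `I * g(J)` for general `g`, and this works for homogeneous ideals and any two monomial
orders.

A monomial in `in(I) * in(J)` has exponent `e = deg a + deg b` for homogeneous `a ∈ I`, `b ∈ J`;
choose such `a_e`, `b_e` for every `e` of degree `d`. For the generic matrix `G`, the products
`a_e * G(b_e)` are linearly independent: already for the generic torus element `x_i ↦ t_i x_i` in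
place of `G`, the minor of their coefficients at the monomials `e` is nonzero, because its
coefficient at the largest possible monomial in `t` is the minor of the `a_e * lt(b_e)`, which have
the distinct leading exponents `e`. By Dickson's lemma the leading exponents of `I * G(J)` are
generated by finitely many, and these survive when `G` is specialised to a matrix at which the
corresponding leading coefficients do not vanish.
-/

open scoped MonomialOrder

section LinearIndependence

variable {σ ι R : Type*} [CommRing R]

theorem degree_prod_le_sum (m : MonomialOrder σ) (s : Finset ι) {p : ι → MvPolynomial σ R}
    {v : ι → σ →₀ ℕ} (h : ∀ i ∈ s, m.degree (p i) ≼[m] v i) :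
    m.degree (∏ i ∈ s, p i) ≼[m] ∑ i ∈ s, v i := by
  refine m.degree_prod_le.trans ?_
  rw [map_sum, map_sum]
  exact Finset.sum_le_sum h

theorem coeff_sum_prod_of_degree_le (m : MonomialOrder σ) (s : Finset ι)
    {p : ι → MvPolynomial σ R} {v : ι → σ →₀ ℕ} (h : ∀ i ∈ s, m.degree (p i) ≼[m] v i) :
    coeff (∑ i ∈ s, v i) (∏ i ∈ s, p i) = ∏ i ∈ s, coeff (v i) (p i) := by
  classical
  induction s using Finset.induction_on with
  | empty => simp
  | insert i s hi ih =>
    have hs : ∀ j ∈ s, m.degree (p j) ≼[m] v j := fun j hj => h j (Finset.mem_insert_of_mem hj)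
    rw [Finset.sum_insert hi, Finset.prod_insert hi, Finset.prod_insert hi,
      m.coeff_mul_of_add_of_degree_le (h i (Finset.mem_insert_self i s))
        (degree_prod_le_sum m s hs), ih hs]

variable [Fintype ι] [DecidableEq ι]

theorem coeff_sum_det_of_degree_le (m : MonomialOrder σ) {N : Matrix ι ι (MvPolynomial σ R)}
    {v : ι → σ →₀ ℕ} (h : ∀ i j, m.degree (N i j) ≼[m] v j) :
    coeff (∑ j, v j) N.det = (Matrix.of fun i j => coeff (v j) (N i j)).det := by
  simp only [Matrix.det_apply, coeff_sum, coeff_smul, Matrix.of_apply]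
  exact Finset.sum_congr rfl fun π _ => by
    rw [coeff_sum_prod_of_degree_le m _ fun i _ => h (π i) i]

variable [IsDomain R]

theorem det_ne_zero_of_blockTriangular_injective {α : Type*} [LinearOrder α] {M : Matrix ι ι R}
    {b : ι → α} (hb : Function.Injective b) (hM : M.BlockTriangular b)
    (hdiag : ∀ i, M i i ≠ 0) : M.det ≠ 0 := by
  let := LinearOrder.lift' b hb
  rw [Matrix.det_of_isUpperTriangular fun i j hij => hM hij]
  exact Finset.prod_ne_zero_iff.2 fun i _ => hdiag i

theorem det_coeff_degree_ne_zero (m : MonomialOrder σ) {p : ι → MvPolynomial σ R}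
    (hp : ∀ i, p i ≠ 0) (hinj : Function.Injective fun i => m.degree (p i)) :
    (Matrix.of fun i j => coeff (m.degree (p i)) (p j)).det ≠ 0 :=
  det_ne_zero_of_blockTriangular_injective (m.toSyn.injective.comp hinj)
    (fun _ _ hij => m.coeff_eq_zero_of_lt hij) fun i => m.coeff_degree_ne_zero_iff.2 (hp i)

theorem linearIndependent_of_det_coeff_ne_zero {p : ι → MvPolynomial σ R} (e : ι → σ →₀ ℕ)
    (h : (Matrix.of fun i j => coeff (e i) (p j)).det ≠ 0) : LinearIndependent R p :=
  .of_comp (LinearMap.pi fun i => lcoeff R (e i)) (Matrix.linearIndependent_cols_of_det_ne_zero h)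

end LinearIndependence

section LinearChange

variable {σ R A B : Type*} [Fintype σ] [CommRing R] [CommRing A] [CommRing B] [Algebra R A]
  [Algebra R B]

/-- The linear change of coordinates `x_i ↦ ∑ j, M_{ji} x_j` given by a matrix with entries in an
algebra over the coefficient ring. Taking the entries in `R`, in a polynomial ring over `R` with one
variable for each entry, and on the diagonal only, it covers `coordChange`, the generic change of
coordinates, and the generic torus element. -/
def linearChange (M : Matrix σ σ A) : MvPolynomial σ R →ₐ[R] MvPolynomial σ A :=
  aeval fun i => ∑ j, M j i • X j

theorem linearChange_X (M : Matrix σ σ A) (i : σ) :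
    linearChange M (X i : MvPolynomial σ R) = ∑ j, M j i • X j := by
  simp [linearChange]

theorem map_linearChange (φ : A →ₐ[R] B) (M : Matrix σ σ A) (p : MvPolynomial σ R) :
    map (φ : A →+* B) (linearChange M p) = linearChange (M.map φ) p := by
  suffices (mapAlgHom φ).comp (linearChange M) = linearChange (M.map φ) from
    DFunLike.congr_fun this p
  refine MvPolynomial.algHom_ext fun i => ?_
  simp [linearChange_X, smul_eq_C_mul]

theorem linearChange_mul (M N : Matrix σ σ R) :
    (linearChange (M * N) : MvPolynomial σ R →ₐ[R] _) = (linearChange M).comp (linearChange N) := by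
  refine MvPolynomial.algHom_ext fun i => ?_
  simp only [AlgHom.comp_apply, linearChange_X, map_sum, map_smul, Finset.smul_sum, smul_smul,
    Matrix.mul_apply, Finset.sum_smul]
  rw [Finset.sum_comm]
  simp only [mul_comm]

theorem linearChange_one [DecidableEq σ] :
    linearChange (1 : Matrix σ σ R) = AlgHom.id R (MvPolynomial σ R) := by
  refine MvPolynomial.algHom_ext fun i => ?_
  simp [linearChange_X, Matrix.one_apply]

theorem isHomogeneous_linearChange (M : Matrix σ σ A) {p : MvPolynomial σ R} {d : ℕ}
    (hp : p.IsHomogeneous d) : (linearChange M p).IsHomogeneous d := by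
  rw [← one_mul d]
  refine hp.aeval _ fun i => .sum _ _ _ fun j _ => ?_
  rw [smul_eq_C_mul]
  exact isHomogeneous_C_mul_X _ _

theorem homogeneousComponent_linearChange (M : Matrix σ σ A) (d : ℕ) (p : MvPolynomial σ R) :
    homogeneousComponent d (linearChange M p) = linearChange M (homogeneousComponent d p) := by
  classical
  induction p using MvPolynomial.induction_on' with
  | monomial u r =>
    have hu : (monomial u r).IsHomogeneous u.degree := isHomogeneous_monomial r rfl
    rw [homogeneousComponent_of_mem (isHomogeneous_linearChange M hu),
      homogeneousComponent_of_mem hu]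
    split_ifs <;> simp
  | add p q hp hq => simp only [map_add, hp, hq]

end LinearChange

section GenericChange

variable {σ R : Type*} [Fintype σ] [CommRing R]

/-- The generic torus element `x_i ↦ t_i x_i`, the `t_i` being the variables of the coefficient
ring. -/
def torusChange [DecidableEq σ] : MvPolynomial σ R →ₐ[R] MvPolynomial σ (MvPolynomial σ R) :=
  linearChange (Matrix.diagonal X)

/-- The generic change of coordinates `x_i ↦ ∑ j, t_{ji} x_j`, the matrix entries `t_{ji}` being the
variables of the coefficient ring. -/
def genericChange : MvPolynomial σ R →ₐ[R] MvPolynomial σ (MvPolynomial (σ × σ) R) :=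
  linearChange (Matrix.mvPolynomialX σ σ R)

theorem map_aeval_genericChange {A : Type*} [CommRing A] [Algebra R A] (M : Matrix σ σ A)
    (p : MvPolynomial σ R) :
    MvPolynomial.map (aeval (R := R) fun i : σ × σ => M i.1 i.2 : _ →+* A) (genericChange p) =
      linearChange M p := by
  classical
  refine (map_linearChange _ _ p).trans ?_
  exact congrArg (linearChange · p) (Matrix.mvPolynomialX_mapMatrix_aeval R M)

theorem torusChange_monomial [DecidableEq σ] (e : σ →₀ ℕ) (r : R) :
    torusChange (monomial e r) = monomial e (monomial e r) := by
  have hX (i : σ) : ∑ j, Matrix.diagonal (X : σ → MvPolynomial σ R) j i • X j =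
      (C (X i) * X i : MvPolynomial σ (MvPolynomial σ R)) := by
    rw [Finset.sum_eq_single i (fun j _ hj => by rw [Matrix.diagonal_apply_ne _ hj, zero_smul])
      (fun hi => absurd (Finset.mem_univ i) hi), Matrix.diagonal_apply_eq, smul_eq_C_mul]
  simp only [torusChange, linearChange, aeval_monomial, hX, mul_pow, Finsupp.prod_mul]
  rw [monomial_eq (a := monomial e r), monomial_eq (a := r)]
  simp only [Finsupp.prod, map_mul, map_prod, map_pow, mul_assoc]
  rfl

theorem coeff_torusChange [DecidableEq σ] (e : σ →₀ ℕ) (p : MvPolynomial σ R) :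
    coeff e (torusChange p) = monomial e (coeff e p) := by
  induction p using MvPolynomial.induction_on' with
  | monomial u r =>
    rw [torusChange_monomial, coeff_monomial, coeff_monomial]
    split_ifs with h <;> simp [h]
  | add p q hp hq => simp only [map_add, coeff_add, hp, hq]

theorem coeff_coeff_map_C_mul_torusChange [DecidableEq σ] (v e : σ →₀ ℕ) (a b : MvPolynomial σ R) :
    coeff v (coeff e (map C a * torusChange b)) = coeff e (a * monomial v (coeff v b)) := by
  rw [coeff_mul, coeff_mul, coeff_sum]
  refine Finset.sum_congr rfl fun x _ => ?_
  rw [coeff_map, coeff_torusChange, coeff_C_mul, coeff_monomial, coeff_monomial]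
  by_cases h : x.2 = v
  · simp [h]
  · simp [h, Ne.symm h]

theorem degree_coeff_map_C_mul_torusChange_le [DecidableEq σ] (m : MonomialOrder σ)
    (e : σ →₀ ℕ) (a b : MvPolynomial σ R) :
    m.degree (coeff e (map C a * torusChange b)) ≼[m] m.degree b := by
  rw [m.degree_le_iff]
  intro v hv
  refine m.le_degree (mem_support_iff.2 fun hb => mem_support_iff.1 hv ?_)
  rw [coeff_coeff_map_C_mul_torusChange, hb, map_zero, mul_zero, coeff_zero]

variable [IsDomain R] {ι : Type*} {a b : ι → MvPolynomial σ R}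

theorem det_coeff_map_C_mul_torusChange_ne_zero [DecidableEq σ] [Fintype ι] [DecidableEq ι]
    (m₁ m₂ : MonomialOrder σ) (ha : ∀ i, a i ≠ 0) (hb : ∀ i, b i ≠ 0)
    (hinj : Function.Injective fun i => m₁.degree (a i) + m₂.degree (b i)) :
    (Matrix.of fun i j => coeff (m₁.degree (a i) + m₂.degree (b i))
      (map C (a j) * torusChange (b j))).det ≠ 0 := by
  have hterm (i : ι) : m₂.leadingTerm (b i) ≠ 0 := mt (m₂.leadingTerm_eq_zero_iff _).1 (hb i)
  have hdeg (i : ι) : m₁.degree (a i * m₂.leadingTerm (b i)) =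
      m₁.degree (a i) + m₂.degree (b i) := by
    classical
    rw [m₁.degree_mul (ha i) (hterm i), MonomialOrder.leadingTerm, m₁.degree_monomial,
      if_neg (m₂.leadingCoeff_ne_zero_iff.2 (hb i))]
  -- In the variables `t`, column `j` has degree at most `m₂.degree (b j)`, and there its
  -- coefficients are those of `a j` times the leading term of `b j`.
  refine ne_zero_iff.2 ⟨∑ j, m₂.degree (b j), ?_⟩
  rw [coeff_sum_det_of_degree_le m₂ fun i j => by
    exact degree_coeff_map_C_mul_torusChange_le m₂ _ (a j) (b j)]
  simpa only [Matrix.of_apply, coeff_coeff_map_C_mul_torusChange, hdeg] using!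
    det_coeff_degree_ne_zero m₁ (fun i => mul_ne_zero (ha i) (hterm i))
      (by simpa only [hdeg] using hinj)

theorem linearIndependent_map_C_mul_genericChange [Finite ι] (m₁ m₂ : MonomialOrder σ)
    (ha : ∀ i, a i ≠ 0) (hb : ∀ i, b i ≠ 0)
    (hinj : Function.Injective fun i => m₁.degree (a i) + m₂.degree (b i)) :
    LinearIndependent (MvPolynomial (σ × σ) R) fun i => map C (a i) * genericChange (b i) := by
  classical
  cases nonempty_fintype ι
  let φ : MvPolynomial (σ × σ) R →ₐ[R] MvPolynomial σ R :=
    aeval fun p => Matrix.diagonal X p.1 p.2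
  have hφ (i : ι) : map (φ : MvPolynomial (σ × σ) R →+* MvPolynomial σ R)
      (map C (a i) * genericChange (b i)) = map C (a i) * torusChange (b i) := by
    have hC : (φ : MvPolynomial (σ × σ) R →+* MvPolynomial σ R).comp C = C := φ.comp_algebraMap
    rw [map_mul, map_aeval_genericChange (Matrix.diagonal X), MvPolynomial.map_map, hC, torusChange]
  refine linearIndependent_of_det_coeff_ne_zero
    (fun i => m₁.degree (a i) + m₂.degree (b i)) fun hdet => ?_
  refine det_coeff_map_C_mul_torusChange_ne_zero m₁ m₂ ha hb hinj ?_
  simpa only [map_zero, AlgHom.map_det, ← hφ, coeff_map] using! congrArg φ hdet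

end GenericChange

section InitialExponents

variable {σ R : Type*} [CommRing R]

/-- The leading exponents, for the monomial order `m`, of the nonzero homogeneous elements of an
ideal. For a homogeneous ideal over a field they are the exponents of the monomials of the initial
ideal; allowing other coefficient rings makes sense of them for generic coefficients. -/
def initialExponents (m : MonomialOrder σ) (A : Ideal (MvPolynomial σ R)) : Set (σ →₀ ℕ) :=
  {e | ∃ f ∈ A, f.IsHomogeneous e.degree ∧ f ≠ 0 ∧ m.degree f = e}

variable {m : MonomialOrder σ} {A : Ideal (MvPolynomial σ R)}

theorem degree_degree_of_isHomogeneous {f : MvPolynomial σ R} {d : ℕ} (hf : f.IsHomogeneous d)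
    (hf0 : f ≠ 0) : (m.degree f).degree = d := by
  by_contra h
  exact m.coeff_degree_ne_zero_iff.2 hf0 (hf.coeff_eq_zero h)

theorem degree_mem_initialExponents {f : MvPolynomial σ R} {d : ℕ} (hfA : f ∈ A)
    (hf : f.IsHomogeneous d) (hf0 : f ≠ 0) : m.degree f ∈ initialExponents m A :=
  ⟨f, hfA, (degree_degree_of_isHomogeneous hf hf0).symm ▸ hf, hf0, rfl⟩

theorem isUpperSet_initialExponents [IsDomain R] : IsUpperSet (initialExponents m A) := by
  classical
  rintro _ e hle ⟨f, hfA, hf, hf0, rfl⟩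
  obtain ⟨c, rfl⟩ := exists_add_of_le hle
  have hc : (monomial c (1 : R)) ≠ 0 := monomial_eq_zero.not.2 one_ne_zero
  have hdeg : m.degree (f * monomial c 1) = m.degree f + c := by
    rw [m.degree_mul hf0 hc, m.degree_monomial, if_neg one_ne_zero]
  rw [← hdeg]
  exact degree_mem_initialExponents (A.mul_mem_right _ hfA) (hf.mul (isHomogeneous_monomial 1 rfl))
    (mul_ne_zero hf0 hc)

theorem degree_map_of_map_leadingCoeff_ne_zero {S : Type*} [CommRing S] {φ : R →+* S}
    {f : MvPolynomial σ R} (h : φ (m.leadingCoeff f) ≠ 0) : m.degree (map φ f) = m.degree f := by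
  refine m.toSyn.injective (le_antisymm ?_ ?_)
  · exact m.degree_le_iff.2 fun e he => m.le_degree (support_map_subset φ f he)
  · exact m.le_degree (mem_support_iff.2 (by rwa [coeff_map]))

theorem finite_setOf_mem_degree_eq [Finite σ] (S : Set (σ →₀ ℕ)) (d : ℕ) :
    {e ∈ S | e.degree = d}.Finite :=
  (Finsupp.finite_of_degree_eq d).subset fun _ he => he.2

theorem card_le_ncard_initialExponents [Finite σ] [Nontrivial R] {ι : Type*} [Fintype ι]
    {p : ι → MvPolynomial σ R} {d : ℕ} (hpA : ∀ i, p i ∈ A) (hp : ∀ i, (p i).IsHomogeneous d)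
    (hli : LinearIndependent R p) :
    Fintype.card ι ≤ {e ∈ initialExponents m A | e.degree = d}.ncard := by
  classical
  have := (finite_setOf_mem_degree_eq (initialExponents m A) d).fintype
  let Φ : (ι → R) →ₗ[R] ({e ∈ initialExponents m A | e.degree = d} → R) :=
    (LinearMap.pi fun e => lcoeff R e.1) ∘ₗ Fintype.linearCombination R p
  suffices Function.Injective Φ by
    rw [Set.ncard_eq_toFinset_card', Set.toFinset_card]
    exact card_le_of_injective R Φ this
  rw [injective_iff_map_eq_zero]
  intro c hc
  refine _root_.funext (Fintype.linearIndependent_iff.1 hli c ?_)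
  by_contra hq
  have hqA : ∑ i, c i • p i ∈ A :=
    sum_mem fun i _ => smul_eq_C_mul (p i) (c i) ▸ A.mul_mem_left _ (hpA i)
  have hqh : (∑ i, c i • p i).IsHomogeneous d :=
    .sum _ _ _ fun i _ => smul_eq_C_mul (p i) (c i) ▸ (hp i).C_mul (c i)
  exact m.coeff_degree_ne_zero_iff.2 hq <| congrFun hc
    ⟨_, degree_mem_initialExponents hqA hqh hq, degree_degree_of_isHomogeneous hqh hq⟩

theorem exists_finset_subset_forall_exists_le {α : Type*} [PartialOrder α] [WellQuasiOrderedLE α]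
    (s : Set α) : ∃ T : Finset α, ↑T ⊆ s ∧ ∀ a ∈ s, ∃ t ∈ T, t ≤ a := by
  have hpwo := Set.isPWO_of_wellQuasiOrderedLE s
  have hfin := WellQuasiOrderedLE.finite_of_isAntichain (setOfPred_minimal_antichain (· ∈ s))
  refine ⟨hfin.toFinset, fun t ht => ((hfin.mem_toFinset).1 ht).prop, fun a ha => ?_⟩
  obtain ⟨t, hta, ht⟩ := hpwo.exists_le_minimal ha
  exact ⟨t, hfin.mem_toFinset.2 ht, hta⟩

theorem exists_forall_initialExponents_subset_map [Finite σ] [IsDomain R] (m : MonomialOrder σ)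
    (A : Ideal (MvPolynomial σ R)) :
    ∃ F : R, F ≠ 0 ∧ ∀ {S : Type*} [CommRing S] [IsDomain S] (φ : R →+* S), φ F ≠ 0 →
      initialExponents m A ⊆ initialExponents m (A.map (map φ)) := by
  obtain ⟨T, hT, hle⟩ := exists_finset_subset_forall_exists_le (initialExponents m A)
  choose! f hfA hf hf0 hfd using fun t (ht : t ∈ T) => hT ht
  refine ⟨∏ t ∈ T, m.leadingCoeff (f t),
    Finset.prod_ne_zero_iff.2 fun t ht => m.leadingCoeff_ne_zero_iff.2 (hf0 t ht), ?_⟩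
  intro S _ _ φ hφ e he
  obtain ⟨t, ht, hte⟩ := hle e he
  rw [map_prod, Finset.prod_ne_zero_iff] at hφ
  have hdeg := degree_map_of_map_leadingCoeff_ne_zero (hφ t ht)
  refine isUpperSet_initialExponents hte ?_
  rw [← hfd t ht, ← hdeg]
  refine degree_mem_initialExponents (Ideal.mem_map_of_mem _ (hfA t ht)) ((hf t ht).map φ) ?_
  exact ne_zero_iff.2 ⟨m.degree (f t), by rw [coeff_map]; exact hφ t ht⟩

end InitialExponents

section HilbertFunction

variable {K n}

theorem ncard_initialExponents_le_hilb (m : MonomialOrder (Fin n)) (A : Ideal (PS K n)) (d : ℕ) :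
    {e ∈ initialExponents m A | e.degree = d}.ncard ≤ hilb K n A d := by
  classical
  have := (finite_setOf_mem_degree_eq (initialExponents m A) d).fintype
  choose f hfA hf hf0 hfd using fun e : {e ∈ initialExponents m A | e.degree = d} => e.2.1
  have hli : LinearIndependent K f := linearIndependent_of_det_coeff_ne_zero _ <|
    det_coeff_degree_ne_zero m hf0 <| by simpa only [hfd] using! Subtype.val_injective
  let F (e : {e ∈ initialExponents m A | e.degree = d}) :
      ↥(A.restrictScalars K ⊓ homogeneousSubmodule (Fin n) K d) := ⟨f e, hfA e, e.2.2 ▸ hf e⟩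
  have hF : LinearIndependent K F := .of_comp (Submodule.subtype _) hli
  have : Module.Finite K (homogeneousSubmodule (Fin n) K d) :=
    Module.Finite.iff_fg.2 (homogeneousSubmodule_fg _ _ d)
  have : Module.Finite K ↥(A.restrictScalars K ⊓ homogeneousSubmodule (Fin n) K d) :=
    Submodule.finiteDimensional_of_le inf_le_right
  rw [Set.ncard_eq_toFinset_card', Set.toFinset_card]
  exact hF.fintype_card_le_finrank

theorem hilb_span_monomial_le_ncard {S : Set (Fin n →₀ ℕ)} (hS : IsUpperSet S) (d : ℕ) :
    hilb K n (Ideal.span ((fun e => monomial e (1 : K)) '' S)) d ≤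
      {e ∈ S | e.degree = d}.ncard := by
  have hfin := finite_setOf_mem_degree_eq S d
  have hle : (Ideal.span ((fun e => monomial e (1 : K)) '' S)).restrictScalars K ⊓
      homogeneousSubmodule (Fin n) K d ≤
        Submodule.span K ((fun e => monomial e (1 : K)) '' {e ∈ S | e.degree = d}) := by
    rintro p ⟨hp, hpd⟩
    rw [p.as_sum]
    refine sum_mem fun e he => ?_
    obtain ⟨s, hs, hse⟩ := mem_ideal_span_monomial_image.1 hp e he
    rw [← mul_one (coeff e p), ← smul_eq_mul, ← smul_monomial]
    refine Submodule.smul_mem _ _ (Submodule.subset_span ⟨e, ⟨hS hse hs, ?_⟩, rfl⟩)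
    by_contra hed
    exact mem_support_iff.1 he (IsHomogeneous.coeff_eq_zero hpd hed)
  have := Module.Finite.span_of_finite K (hfin.image fun e => monomial e (1 : K))
  have := (hfin.image fun e => monomial e (1 : K)).fintype
  calc hilb K n (Ideal.span ((fun e => monomial e (1 : K)) '' S)) d
      ≤ Set.finrank K ((fun e => monomial e (1 : K)) '' {e ∈ S | e.degree = d}) :=
        Submodule.finrank_mono hle
    _ ≤ ((fun e => monomial e (1 : K)) '' {e ∈ S | e.degree = d}).ncard := by
        rw [Set.ncard_eq_toFinset_card']
        exact finrank_span_le_card _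
    _ ≤ {e ∈ S | e.degree = d}.ncard := Set.ncard_image_le hfin

theorem initialIdealO_eq_span (m : MonomialOrder (Fin n)) {I : Ideal (PS K n)}
    (hI : IsHomog K n I) :
    initialIdealO K n (fun a b => a ≺[m] b) I =
      Ideal.span ((fun e => monomial e (1 : K)) '' initialExponents m I) := by
  refine congrArg Ideal.span (Set.ext fun q => ⟨?_, ?_⟩)
  · rintro ⟨f, hf, e, he, hmax, rfl⟩
    have hcoeff : coeff e (homogeneousComponent e.degree f) ≠ 0 := by
      rw [coeff_homogeneousComponent, if_pos rfl]
      exact mem_support_iff.1 he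
    have hdeg : m.degree (homogeneousComponent e.degree f) = e := by
      refine m.toSyn.injective (le_antisymm (m.degree_le_iff.2 fun e' he' => ?_)
        (m.le_degree (mem_support_iff.2 hcoeff)))
      rw [mem_support_iff, coeff_homogeneousComponent, ite_ne_right_iff] at he'
      exact (hmax e' (mem_support_iff.2 he'.2)).elim (fun h => (congrArg m.toSyn h).le) le_of_lt
    exact ⟨e, ⟨_, hI f hf _, homogeneousComponent_isHomogeneous _ _, ne_zero_iff.2 ⟨e, hcoeff⟩,
      hdeg⟩, rfl⟩
  · rintro ⟨_, ⟨f, hf, -, hf0, rfl⟩, rfl⟩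
    refine ⟨f, hf, m.degree f, m.degree_mem_support hf0, fun e he => ?_, rfl⟩
    exact (m.le_degree he).eq_or_lt.imp_left fun h => m.toSyn.injective h

open scoped Pointwise in
theorem hilb_initialIdealO_mul_initialIdealO_le_ncard (m₁ m₂ : MonomialOrder (Fin n))
    {I J : Ideal (PS K n)} (hI : IsHomog K n I) (hJ : IsHomog K n J) (d : ℕ) :
    hilb K n (initialIdealO K n (fun a b => a ≺[m₁] b) I *
      initialIdealO K n (fun a b => a ≺[m₂] b) J) d ≤
        {e ∈ initialExponents m₁ I + initialExponents m₂ J | e.degree = d}.ncard := by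
  have hS : IsUpperSet (initialExponents m₁ I + initialExponents m₂ J) := by
    rintro _ e hle ⟨u, hu, v, hv, rfl⟩
    obtain ⟨c, rfl⟩ := exists_add_of_le hle
    exact ⟨u, hu, v + c, isUpperSet_initialExponents le_self_add hv, (add_assoc u v c).symm⟩
  rw [initialIdealO_eq_span m₁ hI, initialIdealO_eq_span m₂ hJ, Ideal.span_mul_span']
  convert hilb_span_monomial_le_ncard hS d using 3
  refine (Set.image_image2_distrib fun u v => ?_).symm
  rw [monomial_mul, one_mul]

end HilbertFunction

section GenericProduct

variable {σ R : Type*} [Fintype σ] [CommRing R]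

/-- The product of `I` with the image of `J` under the generic change of coordinates, an ideal over
the ring of polynomial functions on matrices that specialises to `I * g(J)` at a matrix `g`. -/
def genericProduct (I J : Ideal (MvPolynomial σ R)) :
    Ideal (MvPolynomial σ (MvPolynomial (σ × σ) R)) :=
  I.map (MvPolynomial.map C) * J.map genericChange

theorem map_genericProduct (I J : Ideal (MvPolynomial σ R)) (M : Matrix σ σ R) :
    (genericProduct I J).map (MvPolynomial.map (eval fun p : σ × σ => M p.1 p.2)) =
      I * J.map (linearChange M) := by
  let φ : MvPolynomial (σ × σ) R →+* R := eval fun p => M p.1 p.2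
  have hC : φ.comp C = RingHom.id R := RingHom.ext fun _ => eval_C _
  have hconst : (MvPolynomial.map φ).comp (MvPolynomial.map C) = RingHom.id (MvPolynomial σ R) := by
    refine RingHom.ext fun p => ?_
    rw [RingHom.comp_apply, MvPolynomial.map_map, hC, MvPolynomial.map_id, RingHom.id_apply]
  have hgeneric : (MvPolynomial.map φ).comp (genericChange (σ := σ)).toRingHom =
      (linearChange M).toRingHom := by
    refine RingHom.ext fun p => ?_
    have h := map_aeval_genericChange M p
    rwa [coe_aeval_eq_eval] at h
  rw [genericProduct, Ideal.map_mul, Ideal.map_map, hconst, Ideal.map_id,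
    ← Ideal.map_coe genericChange, Ideal.map_map]
  exact congrArg (I * J.map ·) hgeneric

open scoped Pointwise in
theorem ncard_initialExponents_add_le_genericProduct [IsDomain R] (m m₁ m₂ : MonomialOrder σ)
    (I J : Ideal (MvPolynomial σ R)) (d : ℕ) :
    {e ∈ initialExponents m₁ I + initialExponents m₂ J | e.degree = d}.ncard ≤
      {e ∈ initialExponents m (genericProduct I J) | e.degree = d}.ncard := by
  have := (finite_setOf_mem_degree_eq (initialExponents m₁ I + initialExponents m₂ J) d).fintype
  have hexists (e : {e ∈ initialExponents m₁ I + initialExponents m₂ J | e.degree = d}) :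
      ∃ a ∈ I, ∃ b ∈ J, a ≠ 0 ∧ b ≠ 0 ∧ m₁.degree a + m₂.degree b = e ∧
        (map C a * genericChange b).IsHomogeneous d := by
    obtain ⟨_, ⟨_, ⟨a, haI, ha, ha0, rfl⟩, _, ⟨b, hbJ, hb, hb0, rfl⟩, rfl⟩, rfl⟩ := e
    refine ⟨a, haI, b, hbJ, ha0, hb0, rfl, ?_⟩
    rw [map_add]
    exact (ha.map C).mul (isHomogeneous_linearChange _ hb)
  choose a haI b hbJ ha0 hb0 hab hhom using hexists
  rw [Set.ncard_eq_toFinset_card', Set.toFinset_card]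
  refine card_le_ncard_initialExponents (fun e => ?_) hhom <|
    linearIndependent_map_C_mul_genericChange m₁ m₂ ha0 hb0 ?_
  · exact Ideal.mul_mem_mul (Ideal.mem_map_of_mem _ (haI e)) (Ideal.mem_map_of_mem _ (hbJ e))
  · simpa only [hab] using! Subtype.val_injective

end GenericProduct

section CoordChange

variable {K n}

theorem coordChange_mul (g h : GL (Fin n) K) :
    coordChange K n (g * h) = (coordChange K n g).comp (coordChange K n h) :=
  linearChange_mul (g : Matrix (Fin n) (Fin n) K) h

theorem coordChange_one : coordChange K n 1 = AlgHom.id K (PS K n) :=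
  linearChange_one

variable (K n) in
/-- `coordChange` as an automorphism of the polynomial ring. -/
def coordChangeEquiv (g : GL (Fin n) K) : PS K n ≃ₐ[K] PS K n :=
  .ofAlgHom (coordChange K n g) (coordChange K n g⁻¹)
    (by rw [← coordChange_mul, mul_inv_cancel, coordChange_one])
    (by rw [← coordChange_mul, inv_mul_cancel, coordChange_one])

theorem mem_map_coordChange {g : GL (Fin n) K} {I : Ideal (PS K n)} {f : PS K n} :
    f ∈ I.map (coordChange K n g) ↔ ∃ a ∈ I, coordChange K n g a = f :=
  Ideal.mem_map_of_equiv (coordChangeEquiv K n g) f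

theorem IsHomog.map_coordChange {I : Ideal (PS K n)} (hI : IsHomog K n I) (g : GL (Fin n) K) :
    IsHomog K n (I.map (coordChange K n g)) := by
  intro f hf d
  obtain ⟨a, ha, rfl⟩ := mem_map_coordChange.1 hf
  exact mem_map_coordChange.2 ⟨_, hI a ha d, (homogeneousComponent_linearChange _ d a).symm⟩

theorem hilb_map_coordChange (I : Ideal (PS K n)) (g : GL (Fin n) K) (d : ℕ) :
    hilb K n (I.map (coordChange K n g)) d = hilb K n I d := by
  have hmap : (I.map (coordChange K n g)).restrictScalars K ⊓ homogeneousSubmodule (Fin n) K d =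
      (I.restrictScalars K ⊓ homogeneousSubmodule (Fin n) K d).map
        (coordChangeEquiv K n g).toLinearEquiv.toLinearMap := by
    ext f
    constructor
    · rintro ⟨hf, hfd⟩
      obtain ⟨a, ha, rfl⟩ := mem_map_coordChange.1 hf
      refine ⟨a, ⟨ha, ?_⟩, rfl⟩
      have := isHomogeneous_linearChange (↑g⁻¹ : Matrix (Fin n) (Fin n) K) hfd
      rwa [← (coordChangeEquiv K n g).symm_apply_apply a]
    · rintro ⟨a, ⟨ha, had⟩, rfl⟩
      exact ⟨mem_map_coordChange.2 ⟨a, ha, rfl⟩, isHomogeneous_linearChange _ had⟩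
  rw [hilb, hmap]
  exact (coordChangeEquiv K n g).toLinearEquiv.finrank_map_eq _

end CoordChange

section MatrixPullback

variable {σ R : Type*} [Fintype σ] [CommRing R]

/-- The pullback of polynomial functions on square matrices along `M ↦ a * M * b`. -/
def matrixPullback (a b : Matrix σ σ R) : MvPolynomial (σ × σ) R →ₐ[R] MvPolynomial (σ × σ) R :=
  aeval fun p => (a.map C * Matrix.mvPolynomialX σ σ R * b.map C : Matrix σ σ _) p.1 p.2

theorem aeval_matrixPullback {A : Type*} [CommRing A] [Algebra R A] (a b : Matrix σ σ R)
    (M : Matrix σ σ A) (F : MvPolynomial (σ × σ) R) :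
    aeval (fun p => M p.1 p.2) (matrixPullback a b F) =
      aeval (fun p => (a.map (algebraMap R A) * M * b.map (algebraMap R A)) p.1 p.2) F := by
  rw [matrixPullback, comp_aeval_apply]
  congr 2 with p
  simp [Matrix.mul_apply]

theorem eval_matrixPullback (a b M : Matrix σ σ R) (F : MvPolynomial (σ × σ) R) :
    eval (fun p => M p.1 p.2) (matrixPullback a b F) = eval (fun p => (a * M * b) p.1 p.2) F :=
  aeval_matrixPullback a b M F

theorem matrixPullback_matrixPullback (a b c d : Matrix σ σ R) (F : MvPolynomial (σ × σ) R) :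
    matrixPullback a b (matrixPullback c d F) = matrixPullback (c * a) (b * d) F := by
  refine (aeval_matrixPullback c d _ F).trans ?_
  simp only [matrixPullback, Matrix.map_mul, Matrix.mul_assoc, algebraMap_eq]

theorem matrixPullback_one_one [DecidableEq σ] (F : MvPolynomial (σ × σ) R) :
    matrixPullback 1 1 F = F := by
  have hone : (1 : Matrix σ σ R).map (C : R → MvPolynomial (σ × σ) R) = 1 :=
    Matrix.map_one _ (map_zero C) (map_one C)
  simp only [matrixPullback, hone, one_mul, mul_one, Matrix.mvPolynomialX_apply]
  exact aeval_X_left_apply F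

end MatrixPullback

section Generally

variable {K n} {P : GL (Fin n) K → Prop}

theorem generally.exists [Infinite K] (hP : generally K n P) : ∃ g, P g := by
  obtain ⟨F, hF, hFP⟩ := hP
  obtain ⟨s, hs⟩ : ∃ s, eval s (F * (Matrix.mvPolynomialX (Fin n) (Fin n) K).det) ≠ 0 := by
    by_contra! h
    exact mul_ne_zero hF (Matrix.det_mvPolynomialX_ne_zero (Fin n) K)
      (MvPolynomial.funext fun s => by rw [h s, map_zero])
  rw [map_mul, Matrix.eval_det_mvPolynomialX] at hs
  exact ⟨.mkOfDetNeZero _ (right_ne_zero_of_mul hs), hFP _ (left_ne_zero_of_mul hs)⟩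

theorem generally.mul_mul (hP : generally K n P) (h₁ h₂ : GL (Fin n) K) :
    generally K n fun g => P (h₁ * g * h₂) := by
  obtain ⟨F, hF, hFP⟩ := hP
  refine ⟨matrixPullback (h₁ : Matrix (Fin n) (Fin n) K) h₂ F, fun h => hF ?_, fun g hg => hFP _ ?_⟩
  · have hinv := congrArg (matrixPullback (↑h₁⁻¹ : Matrix (Fin n) (Fin n) K) ↑h₂⁻¹) h
    rwa [matrixPullback_matrixPullback, Units.mul_inv, Units.inv_mul, matrixPullback_one_one,
      map_zero] at hinv
  · rwa [eval_matrixPullback] at hg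

end Generally

section GinProduct

variable {K n}

theorem generally_hilb_initialIdealO_mul_le (m₁ m₂ : MonomialOrder (Fin n)) {I J : Ideal (PS K n)}
    (hI : IsHomog K n I) (hJ : IsHomog K n J) :
    generally K n fun g => ∀ d,
      hilb K n (initialIdealO K n (fun a b => a ≺[m₁] b) I *
        initialIdealO K n (fun a b => a ≺[m₂] b) J) d ≤
          hilb K n (I * J.map (coordChange K n g)) d := by
  obtain ⟨F, hF, hsub⟩ := exists_forall_initialExponents_subset_map m₁ (genericProduct I J)
  refine ⟨F, hF, fun g hg d => ?_⟩
  have hsub_g := map_genericProduct I J (g : Matrix (Fin n) (Fin n) K) ▸ hsub _ hg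
  calc
    _ ≤ _ := hilb_initialIdealO_mul_initialIdealO_le_ncard m₁ m₂ hI hJ d
    _ ≤ {e ∈ initialExponents m₁ (genericProduct I J) | e.degree = d}.ncard :=
      ncard_initialExponents_add_le_genericProduct m₁ m₁ m₂ I J d
    _ ≤ {e ∈ initialExponents m₁ (I * J.map (coordChange K n g)) | e.degree = d}.ncard :=
      Set.ncard_le_ncard (fun _ he => ⟨hsub_g he.1, he.2⟩) (finite_setOf_mem_degree_eq _ d)
    _ ≤ _ := ncard_initialExponents_le_hilb m₁ _ d

theorem hilb_general_product_ge_gins_general (m₁ m₂ : MonomialOrder (Fin n))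
    {I J : Ideal (PS K n)} (hI : IsHomog K n I) (hJ : IsHomog K n J) (h₁ h₂ : GL (Fin n) K) :
    generally K n fun g => ∀ d,
      hilb K n (initialIdealO K n (fun a b => a ≺[m₁] b) (I.map (coordChange K n h₁)) *
        initialIdealO K n (fun a b => a ≺[m₂] b) (J.map (coordChange K n h₂))) d ≤
          hilb K n (I * J.map (coordChange K n g)) d := by
  have htranslate (g : GL (Fin n) K) :
      (I * J.map (coordChange K n g)).map (coordChange K n h₁) =
        I.map (coordChange K n h₁) *
          (J.map (coordChange K n h₂)).map (coordChange K n (h₁ * g * h₂⁻¹)) := by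
    rw [Ideal.map_mul, Ideal.map_mapₐ, Ideal.map_mapₐ, ← coordChange_mul, ← coordChange_mul,
      inv_mul_cancel_right]
  obtain ⟨F, hF, hle⟩ := (generally_hilb_initialIdealO_mul_le m₁ m₂ (hI.map_coordChange h₁)
    (hJ.map_coordChange h₂)).mul_mul h₁ h₂⁻¹
  refine ⟨F, hF, fun g hg d => (hle g hg d).trans_eq ?_⟩
  rw [← htranslate, hilb_map_coordChange]

variable (n) in
/-- The monomial order underlying `oplexLt`: Mathlib's `MonomialOrder.lex` on the variables taken in
the opposite order. -/
def oplexOrder : MonomialOrder (Fin n) := MonomialOrder.lex (σ := (Fin n)ᵒᵈ)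

end GinProduct

/-- **Corollary 2.9(ii)** (Caviglia–Murai): for homogeneous ideals `I, J ⊆ S` and a general
change of coordinates `g ∈ GL_n(K)`,
`H(I·g(J), d) ≥ H(Gin_lex(I)·Gin_oplex(J), d)` for all `d ≥ 0`. -/
theorem hilb_general_product_ge_gins [Infinite K]
    (I J : Ideal (PS K n)) (hI : IsHomog K n I) (hJ : IsHomog K n J)
    (GinI : Ideal (PS K n))
    (hGinI : generally K n (fun g =>
      initialIdealO K n (lexLt n) (Ideal.map (coordChange K n g) I) = GinI))
    (GinJ : Ideal (PS K n))
    (hGinJ : generally K n (fun g =>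
      initialIdealO K n (oplexLt n) (Ideal.map (coordChange K n g) J) = GinJ))
 :
    generally K n (fun g => ∀ d : ℕ,
      hilb K n (GinI * GinJ) d ≤ hilb K n (I * Ideal.map (coordChange K n g) J) d) := by
  obtain ⟨g₁, rfl⟩ := hGinI.exists
  obtain ⟨g₂, rfl⟩ := hGinJ.exists
  exact hilb_general_product_ge_gins_general .lex (oplexOrder n) hI hJ g₁ g₂

end
end

section
/- Let K be an infinite field and S = K[x_1,...,x_n]. Let I and J be two homogeneous ideals of S. Then for a general change of coordinates g ∈ GL_n(K), the Krull dimension of Tor_i^S(S/I, S/g(J)) is zero for all i > 0. -/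
open MvPolynomial TensorProduct CategoryTheory

noncomputable section

variable (K : Type) [Field K] (n : ℕ)

/-!
For each variable `x_k`, let `E` be the coordinate ring of the incidence variety of pairs `(p, h)`
of a point `p` with `x_k(p) ≠ 0` and a matrix `h` that maps `p` into `V(J)`. Because `p ≠ 0`, the
condition on `h` has the same shape for every `p`, so `E` is flat over `S`. By generic flatness `E`
and `E ⊗[S] (S ⧸ I)` become flat over the ring `A` of functions of `h` after inverting some
`F ≠ 0`; by dimension shifting so does `E ⊗[S] M'` for every syzygy module `M'` of `S ⧸ I`.
If `F(g) ≠ 0`, specializing `h = g` turns `E` into `(S ⧸ g(J))` localized at `x_k` and preserves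
injectivity of `E ⊗[S] M' → E ⊗[S] P`, so the localization of `Tor_i(S ⧸ I, S ⧸ g(J))` at `x_k`
vanishes for `i > 0`. Hence a power of every variable annihilates this module.
-/

section GenericFreeness

variable {σ R : Type*} [CommRing R]

/-- `B` is a Gröbner basis of the ideal `Q` all of whose leading coefficients are invertible, so
that division by `B` is possible over any commutative ring `R`. -/
structure IsUnitGroebner (m : MonomialOrder σ) (Q : Ideal (MvPolynomial σ R))
    (B : Set (MvPolynomial σ R)) : Prop where
  subset : B ⊆ Q
  isUnit_leadingCoeff : ∀ b ∈ B, IsUnit (m.leadingCoeff b)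
  exists_degree_le : ∀ f ∈ Q, f ≠ 0 → ∃ b ∈ B, m.degree b ≤ m.degree f

/-- Macaulay's basis theorem. -/
lemma IsUnitGroebner.isCompl {m : MonomialOrder σ} {Q : Ideal (MvPolynomial σ R)}
    {B : Set (MvPolynomial σ R)} (h : IsUnitGroebner m Q B) :
    IsCompl (Q.restrictScalars R) (restrictSupport R {c | ∀ b ∈ B, ¬ m.degree b ≤ c}) := by
  constructor
  · rw [Submodule.disjoint_def]
    intro f hfQ hf
    by_contra hf0
    obtain ⟨b, hb, hle⟩ := h.exists_degree_le f hfQ hf0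
    exact hf (m.degree_mem_support hf0) b hb hle
  · rw [codisjoint_iff, eq_top_iff]
    intro f _
    obtain ⟨c, r, rfl, -, hr⟩ := m.div_set h.isUnit_leadingCoeff f
    refine Submodule.add_mem_sup (Q.sum_mem fun b _ ↦ ?_) fun d hd ↦ hr d hd
    exact Q.mul_mem_left _ (h.subset b.2)

lemma IsUnitGroebner.free_quotient {m : MonomialOrder σ} {Q : Ideal (MvPolynomial σ R)}
    {B : Set (MvPolynomial σ R)} (h : IsUnitGroebner m Q B) :
    Module.Free R (MvPolynomial σ R ⧸ Q) :=
  have := Module.Free.of_basis (basisRestrictSupport R {c | ∀ b ∈ B, ¬ m.degree b ≤ c})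
  .of_equiv ((Submodule.quotientEquivOfIsCompl _ _ h.isCompl).symm ≪≫ₗ
    Submodule.Quotient.restrictScalarsEquiv R Q)

/-- Dickson's lemma, applied to the leading monomials of `Q`. -/
lemma exists_finite_leadingMonomials [Finite σ] (m : MonomialOrder σ)
    (Q : Ideal (MvPolynomial σ R)) :
    ∃ B : Set (MvPolynomial σ R), B.Finite ∧ (∀ b ∈ B, b ∈ Q ∧ b ≠ 0) ∧
      ∀ f ∈ Q, f ≠ 0 → ∃ b ∈ B, m.degree b ≤ m.degree f := by
  let T : Set (σ →₀ ℕ) := m.degree '' {f | f ∈ Q ∧ f ≠ 0}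
  have hfin : {d | Minimal (· ∈ T) d}.Finite :=
    WellQuasiOrderedLE.finite_of_isAntichain (setOfPred_minimal_antichain _)
  have hsurj : Set.SurjOn m.degree {f | f ∈ Q ∧ f ≠ 0} {d | Minimal (· ∈ T) d} :=
    fun _ hd ↦ hd.prop
  obtain ⟨B, hBQ, hB⟩ := hsurj.exists_bijOn_subset
  refine ⟨B, hB.finite_iff_finite.mpr hfin, hBQ, fun f hfQ hf ↦ ?_⟩
  obtain ⟨d, hdf, hd⟩ := exists_minimal_le_of_wellFoundedLT (· ∈ T) _ ⟨f, ⟨hfQ, hf⟩, rfl⟩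
  obtain ⟨b, hb, rfl⟩ := hB.surjOn hd
  exact ⟨b, hb, hdf⟩

lemma degree_map_of_injective {R' : Type*} [CommRing R'] (m : MonomialOrder σ) {φ : R →+* R'}
    (hφ : Function.Injective φ) (f : MvPolynomial σ R) :
    m.degree (MvPolynomial.map φ f) = m.degree f := by
  rw [MonomialOrder.degree, MonomialOrder.degree, support_map_of_injective f hφ]

lemma isUnitGroebner_map_of_isLocalization (m : MonomialOrder σ) {Q : Ideal (MvPolynomial σ R)}
    {B : Set (MvPolynomial σ R)} (hBQ : B ⊆ Q)
    (hdeg : ∀ f ∈ Q, f ≠ 0 → ∃ b ∈ B, m.degree b ≤ m.degree f)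
    (M : Submonoid R) (hM : M ≤ nonZeroDivisors R) (L : Type*) [CommRing L] [Algebra R L]
    [IsLocalization M L] (hB : ∀ b ∈ B, IsUnit (algebraMap R L (m.leadingCoeff b))) :
    IsUnitGroebner m (Q.map (MvPolynomial.map (algebraMap R L)))
      (MvPolynomial.map (algebraMap R L) '' B) := by
  have hinj : Function.Injective (algebraMap R L) := IsLocalization.injective L hM
  refine ⟨?_, ?_, fun f hf hf0 ↦ ?_⟩
  · rintro _ ⟨b, hb, rfl⟩
    exact Ideal.mem_map_of_mem _ (hBQ hb)
  · rintro _ ⟨b, hb, rfl⟩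
    rw [MonomialOrder.leadingCoeff, degree_map_of_injective m hinj, coeff_map]
    exact hB b hb
  · let := algebraMvPolynomial (R := R) (S := L) (σ := σ)
    obtain ⟨⟨⟨p, hp⟩, ⟨_, s, hs, rfl⟩⟩, hfp⟩ :=
      (IsLocalization.mem_map_algebraMap_iff (M.map (C (σ := σ))) (MvPolynomial σ L)).mp hf
    replace hfp : f * C (algebraMap R L s) = MvPolynomial.map (algebraMap R L) p := by
      simpa using hfp
    have hdegree : m.degree p = m.degree f := by
      rw [← degree_map_of_injective m hinj p, ← hfp, m.degree_mul_of_right_mem_nonZeroDivisors hf0,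
        m.degree_C, add_zero]
      rw [m.leadingCoeff_C]
      exact (IsLocalization.map_units L ⟨s, hs⟩).mem_nonZeroDivisors
    have hp0 : p ≠ 0 := by
      rintro rfl
      rw [map_zero, ((IsLocalization.map_units L ⟨s, hs⟩).map C).mul_left_eq_zero] at hfp
      exact hf0 hfp
    obtain ⟨b, hb, hle⟩ := hdeg p hp hp0
    exact ⟨_, ⟨b, hb, rfl⟩, by rwa [degree_map_of_injective m hinj, ← hdegree]⟩

/-- Base change commutes with quotients of polynomial rings. -/
def tensorQuotientMvPolynomialEquiv (Q : Ideal (MvPolynomial σ R)) (L : Type*) [CommRing L]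
    [Algebra R L] : L ⊗[R] (MvPolynomial σ R ⧸ Q) ≃ₐ[L]
      MvPolynomial σ L ⧸ Q.map (MvPolynomial.map (σ := σ) (algebraMap R L)) :=
  (Algebra.TensorProduct.tensorQuotientEquiv L (MvPolynomial σ R) L Q).trans <|
    Ideal.quotientEquivAlg _ _ (algebraTensorAlgEquiv R L) <| by
      rw [← Ideal.map_coe Algebra.TensorProduct.includeRight, Ideal.map_map]
      congr 1
      ext <;> simp

lemma exists_forall_dvd_flat_tensor_quotient [IsDomain R] [Finite σ]
    (Q : Ideal (MvPolynomial σ R)) :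
    ∃ F : R, F ≠ 0 ∧ ∀ F', F ∣ F' →
      Module.Flat R (Localization.Away F' ⊗[R] (MvPolynomial σ R ⧸ Q)) := by
  let : LinearOrder σ := IsWellOrder.linearOrder WellOrderingRel
  let m : MonomialOrder σ := .lex
  obtain ⟨B, hBfin, hBQ, hdeg⟩ := exists_finite_leadingMonomials m Q
  have hF0 : ∏ b ∈ hBfin.toFinset, m.leadingCoeff b ≠ 0 :=
    Finset.prod_ne_zero_iff.mpr fun b hb ↦
      m.leadingCoeff_ne_zero_iff.mpr (hBQ b (hBfin.mem_toFinset.mp hb)).2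
  refine ⟨_, hF0, fun F hF ↦ ?_⟩
  obtain rfl | hF' := eq_or_ne F 0
  · have : Subsingleton (Localization.Away (0 : R)) :=
      IsLocalization.subsingleton (Submonoid.mem_powers (0 : R))
    have : Module.Free R (Localization.Away (0 : R) ⊗[R] (MvPolynomial σ R ⧸ Q)) :=
      .of_subsingleton R _
    exact .of_free
  have hB (b) (hb : b ∈ B) : IsUnit (algebraMap R (Localization.Away F) (m.leadingCoeff b)) :=
    isUnit_of_dvd_unit (map_dvd _ ((Finset.dvd_prod_of_mem _ (hBfin.mem_toFinset.mpr hb)).trans hF))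
      (IsLocalization.Away.algebraMap_isUnit F)
  have := (isUnitGroebner_map_of_isLocalization m (fun b hb ↦ (hBQ b hb).1) hdeg
    (Submonoid.powers F) (powers_le_nonZeroDivisors_of_noZeroDivisors hF') _ hB).free_quotient
  have : Module.Flat (Localization.Away F)
      (Localization.Away F ⊗[R] (MvPolynomial σ R ⧸ Q)) :=
    .of_linearEquiv (tensorQuotientMvPolynomialEquiv Q (Localization.Away F)).toLinearEquiv
  exact .trans R (Localization.Away F) _

/-- Generic flatness, in a form that persists on smaller principal open sets. -/
lemma exists_forall_dvd_flat_tensor {A : Type*} [CommRing A] [IsDomain A] (W : Type*) [CommRing W]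
    [Algebra A W] [Algebra.FiniteType A W] :
    ∃ F : A, F ≠ 0 ∧ ∀ F', F ∣ F' → Module.Flat A (Localization.Away F' ⊗[A] W) := by
  obtain ⟨k, f, hf⟩ := Algebra.FiniteType.iff_quotient_mvPolynomial''.mp ‹_›
  obtain ⟨F, hF, h⟩ := exists_forall_dvd_flat_tensor_quotient (RingHom.ker f)
  refine ⟨F, hF, fun F' hF' ↦ ?_⟩
  have := h F' hF'
  exact .of_linearEquiv (LinearEquiv.lTensor (Localization.Away F')
    (Ideal.quotientKerAlgEquivOfSurjective hf).symm.toLinearEquiv)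

end GenericFreeness

section Purity

variable {A L' L L'' : Type*} [CommRing A] [AddCommGroup L'] [Module A L'] [AddCommGroup L]
  [Module A L] [AddCommGroup L''] [Module A L'']

lemma mem_smul_top_iff_one_tmul_eq_zero (m : Ideal A) (v : L) :
    v ∈ m • (⊤ : Submodule A L) ↔ (1 : A ⧸ m) ⊗ₜ[A] v = 0 := by
  rw [← (quotTensorEquivQuotSMul L m).map_eq_zero_iff, ← map_one (Ideal.Quotient.mk m),
    quotTensorEquivQuotSMul_mk_tmul, one_smul, Submodule.Quotient.mk_eq_zero]

variable [Module.Flat A L''] {f : L' →ₗ[A] L} {g : L →ₗ[A] L''}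

lemma flat_of_exact [Module.Flat A L] (hf : Function.Injective f) (hg : Function.Surjective g)
    (hfg : Function.Exact f g) : Module.Flat A L' := by
  rw [Module.Flat.iff_rTensor_injective']
  intro I
  have hI : Function.Injective (I.subtype.rTensor L ∘ₗ f.lTensor I) :=
    (Module.Flat.rTensor_preserves_injective_linearMap _ I.subtype_injective).comp
      (LinearMap.lTensor_injective_of_exact_of_flat g hg f hf hfg I)
  rw [LinearMap.rTensor_comp_lTensor, ← LinearMap.lTensor_comp_rTensor] at hI
  exact .of_comp hI

lemma mem_smul_top_of_exact_of_flat (hf : Function.Injective f) (hg : Function.Surjective g)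
    (hfg : Function.Exact f g) (m : Ideal A) {v : L'} (hv : f v ∈ m • (⊤ : Submodule A L)) :
    v ∈ m • (⊤ : Submodule A L') := by
  rw [mem_smul_top_iff_one_tmul_eq_zero] at hv ⊢
  apply LinearMap.lTensor_injective_of_exact_of_flat g hg f hf hfg (A ⧸ m)
  rwa [LinearMap.lTensor_tmul, map_zero]

end Purity

section FlatFamily

variable {S A E : Type*} [CommRing S] [CommRing A] [CommRing E] [Algebra S E] [Algebra A E]
  [SMulCommClass S A E]

lemma smul_mem_smul_top_of_mem_map {W : Type*} [AddCommGroup W] [Module A W] [Module E W]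
    [IsScalarTower A E W] (m : Ideal A) {e : E} (he : e ∈ m.map (algebraMap A E)) (w : W) :
    e • w ∈ m • (⊤ : Submodule A W) := by
  have hew : e • w ∈ m.map (algebraMap A E) • (⊤ : Submodule E W) :=
    Submodule.smul_mem_smul he Submodule.mem_top
  rwa [← Submodule.restrictScalars_mem A, Ideal.smul_restrictScalars,
    Submodule.restrictScalars_top] at hew

variable {M' P M : Type*} [AddCommGroup M'] [AddCommGroup P] [AddCommGroup M]
  [Module S M'] [Module S P] [Module S M] {f : M' →ₗ[S] P} {g : P →ₗ[S] M}

lemma one_tmul_mem_smul_top {a : Ideal S} {m : Ideal A}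
    (ham : a.map (algebraMap S E) ≤ m.map (algebraMap A E)) {p : P}
    (hp : p ∈ a • (⊤ : Submodule S P)) :
    (1 : E) ⊗ₜ[S] p ∈ m • (⊤ : Submodule A (E ⊗[S] P)) := by
  induction hp using Submodule.smul_induction_on' with
  | smul s hs p _ =>
    rw [TensorProduct.tmul_smul, ← algebraMap_smul E s]
    exact smul_mem_smul_top_of_mem_map m (ham (Ideal.mem_map_of_mem _ hs)) _
  | add x _ y _ hx hy => rw [TensorProduct.tmul_add]; exact add_mem hx hy

lemma rTensor_eq_zero_of_mem_smul_top {Z : Type*} [CommRing Z] [Algebra S Z] (ρ : E →ₐ[S] Z)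
    {m : Ideal A} (hρ : m.map (algebraMap A E) ≤ RingHom.ker ρ) {w : E ⊗[S] M}
    (hw : w ∈ m • (⊤ : Submodule A (E ⊗[S] M))) : ρ.toLinearMap.rTensor M w = 0 := by
  induction hw using Submodule.smul_induction_on' with
  | smul c hc w hw =>
    clear hw
    have hρc : ρ (algebraMap A E c) = 0 := hρ (Ideal.mem_map_of_mem _ hc)
    induction w using TensorProduct.induction_on with
    | zero => simp
    | add x y hx hy => rw [smul_add, map_add, hx, hy, add_zero]
    | tmul e x => simp [TensorProduct.smul_tmul', Algebra.smul_def, hρc]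
  | add x _ y _ hx hy => rw [map_add, hx, hy, add_zero]

lemma flat_tensor_of_exact [Module.Flat S E] [Module.Flat A (E ⊗[S] P)]
    [Module.Flat A (E ⊗[S] M)] (hf : Function.Injective f) (hg : Function.Surjective g)
    (hfg : Function.Exact f g) : Module.Flat A (E ⊗[S] M') :=
  flat_of_exact (f := (f.baseChange E).restrictScalars A) (g := (g.baseChange E).restrictScalars A)
    (Module.Flat.lTensor_preserves_injective_linearMap f hf) (LinearMap.lTensor_surjective E hg)
    (lTensor_exact E hfg hg)

lemma one_tmul_eq_zero_of_flat [Module.Flat S E] [Module.Flat A (E ⊗[S] M)]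
    (hf : Function.Injective f) (hg : Function.Surjective g) (hfg : Function.Exact f g)
    {a : Ideal S} {m : Ideal A} (ham : a.map (algebraMap S E) ≤ m.map (algebraMap A E))
    {Z : Type*} [CommRing Z] [Algebra S Z] (ρ : E →ₐ[S] Z)
    (hρ : m.map (algebraMap A E) ≤ RingHom.ker ρ) {v : M'}
    (hv : f v ∈ a • (⊤ : Submodule S P)) : (1 : Z) ⊗ₜ[S] v = 0 := by
  have hpure : (1 : E) ⊗ₜ[S] v ∈ m • (⊤ : Submodule A (E ⊗[S] M')) :=
    mem_smul_top_of_exact_of_flat (f := (f.baseChange E).restrictScalars A)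
      (g := (g.baseChange E).restrictScalars A)
      (Module.Flat.lTensor_preserves_injective_linearMap f hf) (LinearMap.lTensor_surjective E hg)
      (lTensor_exact E hfg hg) m (one_tmul_mem_smul_top ham hv)
  simpa using rTensor_eq_zero_of_mem_smul_top ρ hρ hpure

lemma flat_tensor_fun [Module.Flat A E] (ι : Type*) [Finite ι] :
    Module.Flat A (E ⊗[S] (ι → S)) := by
  classical
  have := Fintype.ofFinite ι
  have : Module.Flat A (ι → E) :=
    .of_linearEquiv (DirectSum.linearEquivFunOnFintype A ι fun _ ↦ E).symm
  exact .of_linearEquiv ((TensorProduct.piScalarRight S E E ι).restrictScalars A)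

variable (S A E M) in
lemma exists_flat_tensor_ker [Module.Flat S E] [Module.Flat A E] [Module.Finite S M]
    [Module.Flat A (E ⊗[S] M)] :
    ∃ (r : ℕ) (p : (Fin r → S) →ₗ[S] M), Function.Surjective p ∧
      Module.Flat A (E ⊗[S] LinearMap.ker p) := by
  obtain ⟨r, p, hp⟩ := Module.Finite.exists_fin' S M
  have : Module.Flat A (E ⊗[S] (Fin r → S)) := flat_tensor_fun (Fin r)
  exact ⟨r, p, hp, flat_tensor_of_exact (Submodule.subtype_injective _) hp
    (LinearMap.exact_subtype_ker_map p)⟩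

lemma flat_tensor_tensor (L : Type*) [AddCommGroup L] [Module A L] [SMulCommClass A S E]
    [Module.Flat A (L ⊗[A] (E ⊗[S] M))] : Module.Flat A ((E ⊗[A] L) ⊗[S] M) :=
  .of_linearEquiv <|
    ((AlgebraTensorModule.cancelBaseChange S E E (E ⊗[A] L) M).symm ≪≫ₗ
      TensorProduct.comm E (E ⊗[A] L) (E ⊗[S] M) ≪≫ₗ
      AlgebraTensorModule.cancelBaseChange A E E (E ⊗[S] M) L).restrictScalars A ≪≫ₗ
    TensorProduct.comm A (E ⊗[S] M) L

lemma exists_pow_smul_mem_smul_top (x : S) (a : Ideal S) {v : M}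
    (hv : (1 : Localization.Away x ⊗[S] (S ⧸ a)) ⊗ₜ[S] v = 0) :
    ∃ N : ℕ, x ^ N • v ∈ a • (⊤ : Submodule S M) := by
  have hassoc : (1 : Localization.Away x) ⊗ₜ[S] ((1 : S ⧸ a) ⊗ₜ[S] v) = 0 := by
    simpa [Algebra.TensorProduct.one_def] using
      congrArg (TensorProduct.assoc S (Localization.Away x) (S ⧸ a) M) hv
  obtain ⟨⟨_, N, rfl⟩, hN⟩ := (IsLocalizedModule.eq_zero_iff (Submonoid.powers x)
    (TensorProduct.mk S (Localization.Away x) ((S ⧸ a) ⊗[S] M) 1)).mp hassoc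
  exact ⟨N, by rwa [mem_smul_top_iff_one_tmul_eq_zero, TensorProduct.tmul_smul]⟩

/-- The submodules `{v | x ^ N • v ∈ V}` form an ascending chain. -/
lemma exists_forall_pow_smul_mem [IsNoetherian S M] (V : Submodule S M) (x : S) :
    ∃ N : ℕ, ∀ v, (∃ k : ℕ, x ^ k • v ∈ V) → x ^ N • v ∈ V := by
  let W : ℕ →o Submodule S M :=
    { toFun k := V.comap (LinearMap.lsmul S M (x ^ k))
      monotone' := monotone_nat_of_le_succ fun k v hv ↦ by
        simpa [pow_succ', mul_smul] using V.smul_mem x hv }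
  obtain ⟨N, hN⟩ := monotone_stabilizes_iff_noetherian.mpr ‹_› W
  refine ⟨N, fun v ⟨k, hk⟩ ↦ ?_⟩
  have hle : W k ≤ W N := by
    rw [hN _ (le_max_right k N)]
    exact W.monotone (le_max_left k N)
  exact hle hk

end FlatFamily

/-- `r` annihilates the homology `ker g / range f`, stated without forming the quotient. -/
def AnnihilatesHomology {S Q₂ Q₁ Q₀ : Type*} [CommRing S] [AddCommGroup Q₂] [AddCommGroup Q₁]
    [AddCommGroup Q₀] [Module S Q₂] [Module S Q₁] [Module S Q₀] (r : S) (f : Q₂ →ₗ[S] Q₁)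
    (g : Q₁ →ₗ[S] Q₀) : Prop :=
  ∀ z, g z = 0 → r • z ∈ LinearMap.range f

section DimensionShift

variable {S M' P M Q₂ Q₁ Q₀ : Type*} [CommRing S] [AddCommGroup M'] [AddCommGroup P]
  [AddCommGroup M] [AddCommGroup Q₂] [AddCommGroup Q₁] [AddCommGroup Q₀] [Module S M']
  [Module S P] [Module S M] [Module S Q₂] [Module S Q₁] [Module S Q₀]

lemma lTensor_rTensor_apply (f : M' →ₗ[S] P) (d : Q₁ →ₗ[S] Q₀) (w : M' ⊗[S] Q₁) :
    d.lTensor P (f.rTensor Q₁ w) = f.rTensor Q₀ (d.lTensor M' w) :=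
  LinearMap.congr_fun ((LinearMap.lTensor_comp_rTensor ..).trans
    (LinearMap.rTensor_comp_lTensor ..).symm) w

variable {f : M' →ₗ[S] P} {g : P →ₗ[S] M} {d₂ : Q₂ →ₗ[S] Q₁} {d₁ : Q₁ →ₗ[S] Q₀}

lemma annihilatesHomology_lTensor_of_exact [Module.Flat S P] (hg : Function.Surjective g)
    (hfg : Function.Exact f g) (hd : Function.Exact d₂ d₁) {r : S}
    (h : ∀ w, f.rTensor Q₀ w ∈ LinearMap.range (d₁.lTensor P) →
      r • w ∈ LinearMap.range (d₁.lTensor M')) :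
    AnnihilatesHomology r (d₂.lTensor M) (d₁.lTensor M) := by
  intro z hz
  obtain ⟨z, rfl⟩ := LinearMap.rTensor_surjective Q₁ hg z
  rw [lTensor_rTensor_apply] at hz
  obtain ⟨w, hw⟩ := (rTensor_exact Q₀ hfg hg _).mp hz
  obtain ⟨v, hv⟩ := h w ⟨z, hw.symm⟩
  have hcycle : d₁.lTensor P (r • z - f.rTensor Q₁ v) = 0 := by
    rw [map_sub, map_smul, lTensor_rTensor_apply, hv, map_smul, hw, sub_self]
  obtain ⟨u, hu⟩ := (Module.Flat.lTensor_exact P hd _).mp hcycle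
  have hgf : g.rTensor Q₁ (f.rTensor Q₁ v) = 0 := (rTensor_exact Q₁ hfg hg _).mpr ⟨v, rfl⟩
  exact ⟨g.rTensor Q₂ u, by rw [lTensor_rTensor_apply, hu, map_sub, map_smul, hgf, sub_zero]⟩

lemma AnnihilatesHomology.lTensor_succ {Q₃ : Type*} [AddCommGroup Q₃] [Module S Q₃]
    {d₃ : Q₃ →ₗ[S] Q₂} [Module.Flat S P] [Module.Flat S Q₀] (hf : Function.Injective f)
    (hg : Function.Surjective g) (hfg : Function.Exact f g) (hd₂ : Function.Exact d₃ d₂)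
    (hd₁ : Function.Exact d₂ d₁) {r : S}
    (h : AnnihilatesHomology r (d₂.lTensor M') (d₁.lTensor M')) :
    AnnihilatesHomology r (d₃.lTensor M) (d₂.lTensor M) := by
  refine annihilatesHomology_lTensor_of_exact hg hfg hd₂ fun w hw ↦ h w ?_
  apply Module.Flat.rTensor_preserves_injective_linearMap f hf
  rw [← lTensor_rTensor_apply, map_zero]
  exact (Module.Flat.lTensor_exact P hd₁ _).mpr hw

lemma exists_tmul_one_eq (a : Ideal S) (w : M ⊗[S] (S ⧸ a)) : ∃ v : M, v ⊗ₜ[S] 1 = w := by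
  obtain ⟨v, hv⟩ := Submodule.Quotient.mk_surjective _ (tensorQuotEquivQuotSMul M a w)
  exact ⟨v, by rw [← tensorQuotEquivQuotSMul_symm_mk, hv, LinearEquiv.symm_apply_apply]⟩

lemma tmul_one_eq_zero_iff (a : Ideal S) (v : M) :
    v ⊗ₜ[S] (1 : S ⧸ a) = 0 ↔ v ∈ a • (⊤ : Submodule S M) := by
  rw [← tensorQuotEquivQuotSMul_symm_mk, LinearEquiv.map_eq_zero_iff,
    Submodule.Quotient.mk_eq_zero]

lemma annihilatesHomology_lTensor_of_smul_mem [Module.Flat S P] (hg : Function.Surjective g)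
    (hfg : Function.Exact f g) (hd : Function.Exact d₂ d₁) {a : Ideal S} {ε : Q₀ →ₗ[S] S ⧸ a}
    (hε : Function.Surjective ε) (hdε : Function.Exact d₁ ε) {r : S}
    (h : ∀ v, f v ∈ a • (⊤ : Submodule S P) → r • v ∈ a • (⊤ : Submodule S M')) :
    AnnihilatesHomology r (d₂.lTensor M) (d₁.lTensor M) := by
  refine annihilatesHomology_lTensor_of_exact hg hfg hd fun w hw ↦
    (lTensor_exact M' hdε hε _).mp ?_
  obtain ⟨v, hv⟩ := exists_tmul_one_eq a (ε.lTensor M' w)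
  have hfv : f v ⊗ₜ[S] (1 : S ⧸ a) = 0 := by
    rw [← LinearMap.rTensor_tmul, hv, ← lTensor_rTensor_apply]
    exact (lTensor_exact P hdε hε _).mpr hw
  rw [map_smul, ← hv, TensorProduct.smul_tmul', tmul_one_eq_zero_iff]
  exact h v ((tmul_one_eq_zero_iff a _).mp hfv)

end DimensionShift

section Tor

universe u

variable {S : Type u} [CommRing S]

lemma AnnihilatesHomology.smul_homology {T : ShortComplex (ModuleCat.{u} S)} {r : S}
    (h : AnnihilatesHomology r T.f.hom T.g.hom) (w : T.homology) : r • w = 0 := by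
  have hπ : Function.Surjective T.homologyπ := (ModuleCat.epi_iff_surjective _).mp inferInstance
  have hι : Function.Injective T.iCycles := (ModuleCat.mono_iff_injective _).mp inferInstance
  obtain ⟨c, rfl⟩ := hπ w
  obtain ⟨y, hy⟩ := h (T.iCycles c) (by
    rw [← ModuleCat.comp_apply, ShortComplex.iCycles_g]; rfl)
  have hc : T.toCycles y = r • c := hι <| by
    rw [← ModuleCat.comp_apply, ShortComplex.toCycles_i, map_smul, ← hy]
  rw [← map_smul, ← hc, ← ModuleCat.comp_apply, ShortComplex.toCycles_comp_homologyπ]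
  rfl

lemma mem_annihilator_tor {M N : ModuleCat.{u} S} (P : ProjectiveResolution N) {i : ℕ} {r : S}
    (h : AnnihilatesHomology r ((P.complex.d (i + 2) (i + 1)).hom.lTensor M)
      ((P.complex.d (i + 1) i).hom.lTensor M)) :
    r ∈ Module.annihilator S (((Tor (ModuleCat.{u} S) (i + 1)).obj M).obj N) := by
  let T := (MonoidalCategory.tensoringLeft (ModuleCat.{u} S)).obj M
  let C := (T.mapHomologicalComplex (ComplexShape.down ℕ)).obj P.complex
  let e : ((Tor (ModuleCat.{u} S) (i + 1)).obj M).obj N ≅ (C.sc' (i + 2) (i + 1) i).homology :=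
    P.isoLeftDerivedObj T (i + 1) ≪≫
      ShortComplex.homologyMapIso (C.isoSc' (i + 2) (i + 1) i (by simp) (by simp))
  rw [LinearEquiv.annihilator_eq e.toLinearEquiv, Module.mem_annihilator]
  exact AnnihilatesHomology.smul_homology h

end Tor

section TorAnnihilator

universe u

variable {S : Type u} {A E : Type*} [CommRing S] [CommRing A] [CommRing E]
  [Algebra S E] [Algebra A E] [SMulCommClass S A E] [Module.Flat S E] {a : Ideal S} {m : Ideal A}
  {x : S}

lemma exists_forall_pow_smul_mem_smul_top {M' P M : Type*} [AddCommGroup M'] [AddCommGroup P]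
    [AddCommGroup M] [Module S M'] [Module S P] [Module S M] [IsNoetherian S M']
    [Module.Flat A (E ⊗[S] M)] {f : M' →ₗ[S] P} {g : P →ₗ[S] M} (hf : Function.Injective f)
    (hg : Function.Surjective g) (hfg : Function.Exact f g)
    (ham : a.map (algebraMap S E) ≤ m.map (algebraMap A E))
    (ρ : E →ₐ[S] Localization.Away x ⊗[S] (S ⧸ a))
    (hρ : m.map (algebraMap A E) ≤ RingHom.ker ρ) :
    ∃ N : ℕ, ∀ v, f v ∈ a • (⊤ : Submodule S P) → x ^ N • v ∈ a • (⊤ : Submodule S M') := by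
  obtain ⟨N, hN⟩ := exists_forall_pow_smul_mem (a • (⊤ : Submodule S M')) x
  exact ⟨N, fun v hv ↦ hN v <| exists_pow_smul_mem_smul_top x a <|
    one_tmul_eq_zero_of_flat hf hg hfg ham ρ hρ hv⟩

lemma exists_pow_annihilatesHomology_lTensor [IsNoetherianRing S] [Module.Flat A E]
    (ham : a.map (algebraMap S E) ≤ m.map (algebraMap A E))
    (ρ : E →ₐ[S] Localization.Away x ⊗[S] (S ⧸ a))
    (hρ : m.map (algebraMap A E) ≤ RingHom.ker ρ)
    {Q : ℕ → Type*} [∀ i, AddCommGroup (Q i)] [∀ i, Module S (Q i)] [∀ i, Module.Flat S (Q i)]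
    {d : ∀ i, Q (i + 1) →ₗ[S] Q i} (hd : ∀ i, Function.Exact (d (i + 1)) (d i))
    {ε : Q 0 →ₗ[S] S ⧸ a} (hε : Function.Surjective ε) (hdε : Function.Exact (d 0) ε)
    (M : Type u) [AddCommGroup M] [Module S M] [Module.Finite S M] [Module.Flat A (E ⊗[S] M)]
    (i : ℕ) :
    ∃ N : ℕ, AnnihilatesHomology (x ^ N) ((d (i + 1)).lTensor M) ((d i).lTensor M) := by
  induction i generalizing M with
  | zero =>
    obtain ⟨r, p, hp⟩ := Module.Finite.exists_fin' S M
    have hex := LinearMap.exact_subtype_ker_map p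
    obtain ⟨N, hN⟩ := exists_forall_pow_smul_mem_smul_top
      (Submodule.subtype_injective (LinearMap.ker p)) hp hex ham ρ hρ
    exact ⟨N, annihilatesHomology_lTensor_of_smul_mem hp hex (hd 0) hε hdε hN⟩
  | succ i ih =>
    obtain ⟨r, p, hp, hker⟩ := exists_flat_tensor_ker S A E M
    obtain ⟨N, hN⟩ := ih (LinearMap.ker p)
    exact ⟨N, hN.lTensor_succ (Submodule.subtype_injective (LinearMap.ker p)) hp
      (LinearMap.exact_subtype_ker_map p) (hd (i + 1)) (hd i)⟩

theorem exists_pow_mem_annihilator_tor [IsNoetherianRing S] [Module.Flat A E]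
    (ham : a.map (algebraMap S E) ≤ m.map (algebraMap A E))
    (ρ : E →ₐ[S] Localization.Away x ⊗[S] (S ⧸ a))
    (hρ : m.map (algebraMap A E) ≤ RingHom.ker ρ) (M : Type u) [AddCommGroup M] [Module S M]
    [Module.Finite S M] [Module.Flat A (E ⊗[S] M)] (i : ℕ) :
    ∃ N : ℕ, x ^ N ∈ Module.annihilator S (((Tor (ModuleCat.{u} S) (i + 1)).obj
      (ModuleCat.of S M)).obj (ModuleCat.of S (S ⧸ a))) := by
  let P := projectiveResolution (ModuleCat.of S (S ⧸ a))
  have hproj (j : ℕ) : Module.Projective S (P.complex.X j) :=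
    (IsProjective.iff_projective (P.complex.X j)).mpr (P.projective j)
  have hflat (j : ℕ) : Module.Flat S (P.complex.X j) := inferInstance
  have hε : Function.Surjective (P.π.f 0) := (ModuleCat.epi_iff_surjective _).mp inferInstance
  have hd (j : ℕ) : Function.Exact (P.complex.d (j + 1 + 1) (j + 1)) (P.complex.d (j + 1) j) :=
    (ShortComplex.ShortExact.moduleCat_exact_iff_function_exact _).mp (P.exact_succ j)
  have hdε : Function.Exact (P.complex.d 1 0) (P.π.f 0) :=
    (ShortComplex.ShortExact.moduleCat_exact_iff_function_exact _).mp P.exact₀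
  obtain ⟨N, hN⟩ := exists_pow_annihilatesHomology_lTensor ham ρ hρ
    (Q := fun j ↦ P.complex.X j) (d := fun j ↦ (P.complex.d (j + 1) j).hom) hd
    (ε := (P.π.f 0).hom) hε hdε M i
  exact ⟨N, mem_annihilator_tor P hN⟩

end TorAnnihilator

section LocalizedFamily

universe u

variable {S : Type u} {A E : Type*} [CommRing S] [CommRing A] [CommRing E]
  [Algebra S E] [Algebra A E]

lemma isUnit_algebraMap_away_tensor (R : Type*) [CommRing R] [Algebra R S] (x : S) (B : Type*)
    [CommRing B] [Algebra R B] : IsUnit (algebraMap S (Localization.Away x ⊗[R] B) x) := by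
  rw [IsScalarTower.algebraMap_apply S (Localization.Away x)]
  exact (IsLocalization.Away.algebraMap_isUnit x).map _

lemma le_ker_algebraMap_tensor_quotient (L : Type*) [CommRing L] [Algebra S L] (a : Ideal S) :
    a ≤ RingHom.ker (algebraMap S (L ⊗[S] (S ⧸ a))) := fun s hs ↦ by
  rw [RingHom.mem_ker, ← Algebra.TensorProduct.includeRight.commutes, Ideal.Quotient.algebraMap_eq,
    Ideal.Quotient.eq_zero_iff_mem.mpr hs, map_zero]

lemma exists_forall_dvd_flat_tensor_and_flat_tensor_tensor [SMulCommClass S A E] [IsDomain A]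
    [Algebra.FiniteType A E] (B : Type*) [CommRing B] [Algebra S B] [Algebra.FiniteType S B] :
    ∃ F : A, F ≠ 0 ∧ ∀ F', F ∣ F' → Module.Flat A (Localization.Away F' ⊗[A] E) ∧
      Module.Flat A (Localization.Away F' ⊗[A] (E ⊗[S] B)) := by
  have : Algebra.FiniteType A (E ⊗[S] B) := .trans (S := E) inferInstance inferInstance
  obtain ⟨F₁, hF₁, hflat₁⟩ := exists_forall_dvd_flat_tensor (A := A) E
  obtain ⟨F₂, hF₂, hflat₂⟩ := exists_forall_dvd_flat_tensor (A := A) (E ⊗[S] B)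
  exact ⟨F₁ * F₂, mul_ne_zero hF₁ hF₂, fun F hF ↦
    ⟨hflat₁ F (dvd_of_mul_right_dvd hF), hflat₂ F (dvd_of_mul_left_dvd hF)⟩⟩

variable [SMulCommClass A S E]

/-- The extension of an `S`-algebra homomorphism `E → Z` that inverts `F` to `E ⊗[A] A_F`. -/
def liftTensorAway {Z : Type*} [CommRing Z] [Algebra S Z] (ρ : E →ₐ[S] Z) {F : A}
    (hF : IsUnit (ρ (algebraMap A E F))) : E ⊗[A] Localization.Away F →ₐ[S] Z :=
  IsLocalization.Away.liftAlgHom (algebraMap A E F) (f := ρ) hF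

lemma liftTensorAway_algebraMap {Z : Type*} [CommRing Z] [Algebra S Z] (ρ : E →ₐ[S] Z) {F : A}
    (hF : IsUnit (ρ (algebraMap A E F))) (e : E) :
    liftTensorAway ρ hF (algebraMap E _ e) = ρ e :=
  IsLocalization.Away.lift_eq _ hF e

variable [IsNoetherianRing S] [SMulCommClass S A E] [Module.Flat S E]

theorem exists_pow_mem_annihilator_tor_of_flat_away {a : Ideal S} {m : Ideal A} {x : S}
    (ham : a.map (algebraMap S E) ≤ m.map (algebraMap A E))
    (ρ : E →ₐ[S] Localization.Away x ⊗[S] (S ⧸ a))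
    (hρ : m.map (algebraMap A E) ≤ RingHom.ker ρ) {F : A} (hF : IsUnit (ρ (algebraMap A E F)))
    (M : Type u) [AddCommGroup M] [Module S M] [Module.Finite S M]
    [Module.Flat A (Localization.Away F ⊗[A] E)]
    [Module.Flat A (Localization.Away F ⊗[A] (E ⊗[S] M))] (i : ℕ) :
    ∃ N : ℕ, x ^ N ∈ Module.annihilator S (((Tor (ModuleCat.{u} S) (i + 1)).obj
      (ModuleCat.of S M)).obj (ModuleCat.of S (S ⧸ a))) := by
  let E' := E ⊗[A] Localization.Away F
  have : Module.Flat S E' := Module.Flat.trans S E E'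
  have : Module.Flat A E' := .of_linearEquiv (TensorProduct.comm A E (Localization.Away F))
  have : Module.Flat A (E' ⊗[S] M) := flat_tensor_tensor (Localization.Away F)
  have hmE' : m.map (algebraMap A E') = (m.map (algebraMap A E)).map (algebraMap E E') := by
    rw [Ideal.map_map, ← IsScalarTower.algebraMap_eq]
  refine exists_pow_mem_annihilator_tor (A := A) (E := E') (m := m) ?_ (liftTensorAway ρ hF) ?_ M i
  · rw [hmE', IsScalarTower.algebraMap_eq S E E', ← Ideal.map_map]
    exact Ideal.map_mono ham
  · rw [hmE', Ideal.map_le_iff_le_comap]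
    intro e he
    rw [Ideal.mem_comap, RingHom.mem_ker, liftTensorAway_algebraMap]
    exact hρ he

end LocalizedFamily

section LinearSubst

variable {𝕜 σ : Type*} [CommRing 𝕜] [Fintype σ]

/-- The linear change of coordinates `x_i ↦ ∑ j, g_{ji} x_j`. -/
def linearSubst (g : Matrix σ σ 𝕜) : MvPolynomial σ 𝕜 →ₐ[𝕜] MvPolynomial σ 𝕜 :=
  aeval fun i ↦ ∑ j, g j i • X j

/-- The maximal ideal of the point `g` of the space of matrices. -/
abbrev matrixIdeal (g : Matrix σ σ 𝕜) : Ideal (MvPolynomial (σ × σ) 𝕜) :=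
  RingHom.ker (eval fun q ↦ g q.1 q.2)

lemma algebraMap_linearSubst_X (g : Matrix σ σ 𝕜) (i : σ) (Z : Type*) [CommRing Z] [Algebra 𝕜 Z]
    [Algebra (MvPolynomial σ 𝕜) Z] [IsScalarTower 𝕜 (MvPolynomial σ 𝕜) Z] :
    algebraMap (MvPolynomial σ 𝕜) Z (linearSubst g (X i)) =
      ∑ j, algebraMap (MvPolynomial σ 𝕜) Z (X j) * algebraMap 𝕜 Z (g j i) := by
  simp [linearSubst, Algebra.smul_def, mul_comm,
    IsScalarTower.algebraMap_apply 𝕜 (MvPolynomial σ 𝕜) Z]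

variable {E : Type*} [CommRing E] [Algebra 𝕜 E] [Algebra (MvPolynomial σ 𝕜) E]
  [Algebra (MvPolynomial (σ × σ) 𝕜) E] [IsScalarTower 𝕜 (MvPolynomial σ 𝕜) E]
  [IsScalarTower 𝕜 (MvPolynomial (σ × σ) 𝕜) E] {ι : MvPolynomial σ 𝕜 →ₐ[𝕜] E}
  (hι : ∀ i, ∑ j, algebraMap (MvPolynomial σ 𝕜) E (X j) *
    algebraMap (MvPolynomial (σ × σ) 𝕜) E (X (j, i)) = ι (X i))
  (g : Matrix σ σ 𝕜)

include hι in
lemma map_map_linearSubst_le {J : Ideal (MvPolynomial σ 𝕜)} (hJ : J ≤ RingHom.ker ι) :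
    (J.map (linearSubst g)).map (algebraMap (MvPolynomial σ 𝕜) E) ≤
      (matrixIdeal g).map (algebraMap (MvPolynomial (σ × σ) 𝕜) E) := by
  set 𝔪 := (matrixIdeal g).map (algebraMap (MvPolynomial (σ × σ) 𝕜) E)
  let π := Ideal.Quotient.mkₐ 𝕜 𝔪
  have hentry (j i : σ) : π (algebraMap _ E (X (j, i) : MvPolynomial (σ × σ) 𝕜)) =
      algebraMap 𝕜 _ (g j i) := by
    rw [← π.commutes, IsScalarTower.algebraMap_apply 𝕜 (MvPolynomial (σ × σ) 𝕜) E]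
    refine Ideal.Quotient.eq.mpr ?_
    rw [← map_sub]
    exact Ideal.mem_map_of_mem _ (by simp [RingHom.mem_ker])
  have hπ : π.comp ((IsScalarTower.toAlgHom 𝕜 (MvPolynomial σ 𝕜) E).comp (linearSubst g)) =
      π.comp ι := by
    ext i
    simp [← hι, algebraMap_linearSubst_X, hentry]
  rw [Ideal.map_le_iff_le_comap, Ideal.map_le_iff_le_comap]
  intro f hf
  have hπf : π (algebraMap _ E (linearSubst g f)) = 0 := by
    simpa [(RingHom.mem_ker).mp (hJ hf)] using DFunLike.congr_fun hπ f
  exact (Ideal.Quotient.eq_zero_iff_mem (I := 𝔪)).mp hπf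

include hι in
lemma apply_algebraMap_eq_eval {Z : Type*} [CommRing Z] [Algebra 𝕜 Z]
    [Algebra (MvPolynomial σ 𝕜) Z] [IsScalarTower 𝕜 (MvPolynomial σ 𝕜) Z]
    (ρ : E →ₐ[MvPolynomial σ 𝕜] Z) {k : σ}
    (hk : IsUnit (algebraMap (MvPolynomial σ 𝕜) Z (X k)))
    (hρι : ∀ i, ρ (ι (X i)) = algebraMap (MvPolynomial σ 𝕜) Z (linearSubst g (X i)))
    (hρ : ∀ j ≠ k, ∀ i, ρ (algebraMap (MvPolynomial (σ × σ) 𝕜) E (X (j, i))) =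
      algebraMap 𝕜 Z (g j i)) (p : MvPolynomial (σ × σ) 𝕜) :
    ρ (algebraMap (MvPolynomial (σ × σ) 𝕜) E p) =
      algebraMap 𝕜 Z (eval (fun q ↦ g q.1 q.2) p) := by
  classical
  have hentry (j i : σ) : ρ (algebraMap (MvPolynomial (σ × σ) 𝕜) E (X (j, i))) =
      algebraMap 𝕜 Z (g j i) := by
    obtain rfl | hj := eq_or_ne j k
    · have hsum := hρι i
      simp only [← hι, map_sum, map_mul, AlgHom.commutes, algebraMap_linearSubst_X] at hsum
      rw [← Finset.add_sum_erase _ _ (Finset.mem_univ j),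
        ← Finset.add_sum_erase _ _ (Finset.mem_univ j),
        Finset.sum_congr rfl fun l hl ↦ by rw [hρ l (Finset.ne_of_mem_erase hl)]] at hsum
      exact hk.mul_left_cancel (add_right_cancel hsum)
    · exact hρ j hj i
  have hcomp : ((ρ.restrictScalars 𝕜).comp (IsScalarTower.toAlgHom 𝕜 _ E)) =
      (Algebra.ofId 𝕜 Z).comp (aeval fun q : σ × σ ↦ g q.1 q.2) := by
    ext q
    simpa using hentry q.1 q.2
  simpa [Algebra.ofId_apply, aeval_eq_eval] using DFunLike.congr_fun hcomp p

end LinearSubst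

section IncidenceVariety

variable {𝕜 σ : Type*} [Field 𝕜] (J : Ideal (MvPolynomial σ 𝕜)) (k : σ)

/-- The coordinate ring of `{p | x_k(p) ≠ 0} × V(J)`. -/
abbrev ChartProduct : Type _ :=
  Localization.Away (X k : MvPolynomial σ 𝕜) ⊗[𝕜] (MvPolynomial σ 𝕜 ⧸ J)

/-- The coordinate ring of the incidence variety of all pairs of a point `p` with `x_k(p) ≠ 0` and
a matrix `h` with `(∑ j, h_{ji} p_j)_i ∈ V(J)`. Such a pair is determined by `p`, the image point
in `V(J)` and the rows `j ≠ k` of `h`, all of which can be chosen freely. -/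
abbrev IncidenceRing : Type _ :=
  MvPolynomial ({j // j ≠ k} × σ) (ChartProduct J k)

instance : CommRing (ChartProduct J k) := inferInstance

namespace IncidenceRing

instance : Module.Flat (MvPolynomial σ 𝕜) (IncidenceRing J k) :=
  have : Module.Flat (MvPolynomial σ 𝕜) (Localization.Away (X k : MvPolynomial σ 𝕜)) :=
    IsLocalization.flat _ (Submonoid.powers (X k))
  have : Module.Flat (MvPolynomial σ 𝕜) (ChartProduct J k) :=
    .trans _ (Localization.Away (X k : MvPolynomial σ 𝕜)) _
  have : Module.Free (ChartProduct J k) (IncidenceRing J k) :=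
    .of_basis (basisMonomials _ _)
  have : Module.Flat (ChartProduct J k) (IncidenceRing J k) := .of_free
  .trans _ (ChartProduct J k) _

instance [Finite σ] : Algebra.FiniteType 𝕜 (IncidenceRing J k) := by
  have : Algebra.FiniteType (MvPolynomial σ 𝕜) (Localization.Away (X k : MvPolynomial σ 𝕜)) :=
    IsLocalization.finiteType_of_monoid_fg (Submonoid.powers (X k)) _
  have : Algebra.FiniteType 𝕜 (Localization.Away (X k : MvPolynomial σ 𝕜)) :=
    .trans (S := MvPolynomial σ 𝕜) inferInstance this
  have : Algebra.FiniteType 𝕜 (ChartProduct J k) :=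
    .trans (S := Localization.Away (X k : MvPolynomial σ 𝕜)) inferInstance inferInstance
  exact .trans (S := ChartProduct J k) inferInstance inferInstance

/-- The comorphism of `(p, h) ↦ (∑ j, h_{ji} p_j)_i`. -/
def imagePoint : MvPolynomial σ 𝕜 →ₐ[𝕜] IncidenceRing J k :=
  (IsScalarTower.toAlgHom 𝕜 (ChartProduct J k) (IncidenceRing J k)).comp
    (Algebra.TensorProduct.includeRight.comp (Ideal.Quotient.mkₐ 𝕜 J) :
      MvPolynomial σ 𝕜 →ₐ[𝕜] ChartProduct J k)

lemma imagePoint_apply (f : MvPolynomial σ 𝕜) :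
    imagePoint J k f = C ((1 : Localization.Away (X k : MvPolynomial σ 𝕜)) ⊗ₜ
      Ideal.Quotient.mk J f) :=
  rfl

lemma le_ker_imagePoint : J ≤ RingHom.ker (imagePoint J k) := fun f hf ↦ by
  rw [RingHom.mem_ker, imagePoint_apply, Ideal.Quotient.eq_zero_iff_mem.mpr hf,
    TensorProduct.tmul_zero, C_0]

lemma isUnit_algebraMap_X :
    IsUnit (algebraMap (MvPolynomial σ 𝕜) (IncidenceRing J k) (X k)) := by
  rw [IsScalarTower.algebraMap_apply _ (ChartProduct J k)]
  exact (isUnit_algebraMap_away_tensor 𝕜 (X k) (MvPolynomial σ 𝕜 ⧸ J)).map _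

variable [Fintype σ]

section Entry

variable [DecidableEq σ]

/-- The matrix entries `h_{ji}` as functions on the incidence variety; the row `j = k` is obtained
by solving `∑ j, x_j h_{ji} = imagePoint x_i`. -/
def entry (q : σ × σ) : IncidenceRing J k :=
  if hq : q.1 = k then
    ↑(isUnit_algebraMap_X J k).unit⁻¹ * (imagePoint J k (X q.2) - ∑ j : {j // j ≠ k},
      algebraMap (MvPolynomial σ 𝕜) (IncidenceRing J k) (X j.1) * X (j, q.2))
  else X (⟨q.1, hq⟩, q.2)

instance : Algebra (MvPolynomial (σ × σ) 𝕜) (IncidenceRing J k) :=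
  (aeval (entry J k)).toAlgebra

instance : IsScalarTower 𝕜 (MvPolynomial (σ × σ) 𝕜) (IncidenceRing J k) :=
  .of_algebraMap_eq fun c ↦ ((aeval (entry J k)).commutes c).symm

lemma algebraMap_entry (q : σ × σ) :
    algebraMap (MvPolynomial (σ × σ) 𝕜) (IncidenceRing J k) (X q) = entry J k q :=
  aeval_X _ q

lemma algebraMap_entry_of_ne (j : {j // j ≠ k}) (i : σ) :
    algebraMap (MvPolynomial (σ × σ) 𝕜) (IncidenceRing J k) (X (j.1, i)) = X (j, i) := by
  rw [algebraMap_entry, entry, dif_neg j.2]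

lemma sum_algebraMap_mul_algebraMap (i : σ) :
    ∑ j, algebraMap (MvPolynomial σ 𝕜) (IncidenceRing J k) (X j) *
      algebraMap (MvPolynomial (σ × σ) 𝕜) (IncidenceRing J k) (X (j, i)) =
      imagePoint J k (X i) := by
  rw [Fintype.sum_eq_add_sum_subtype_ne _ k]
  simp_rw [algebraMap_entry_of_ne]
  rw [algebraMap_entry, entry, dif_pos rfl, ← mul_assoc, IsUnit.mul_val_inv, one_mul,
    sub_add_cancel]

instance : SMulCommClass (MvPolynomial σ 𝕜) (MvPolynomial (σ × σ) 𝕜) (IncidenceRing J k) :=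
  ⟨fun s a e ↦ by simp only [Algebra.smul_def, mul_left_comm]⟩

instance : SMulCommClass (MvPolynomial (σ × σ) 𝕜) (MvPolynomial σ 𝕜) (IncidenceRing J k) :=
  .symm _ _ _

instance : Algebra.FiniteType (MvPolynomial (σ × σ) 𝕜) (IncidenceRing J k) :=
  .of_restrictScalars_finiteType 𝕜 _ _

end Entry

variable {J k} {g : Matrix σ σ 𝕜} {Z : Type*} [CommRing Z] [Algebra 𝕜 Z]
  [Algebra (MvPolynomial σ 𝕜) Z] [IsScalarTower 𝕜 (MvPolynomial σ 𝕜) Z]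
  (hk : IsUnit (algebraMap (MvPolynomial σ 𝕜) Z (X k)))
  (hJ : J.map (linearSubst g) ≤ RingHom.ker (algebraMap (MvPolynomial σ 𝕜) Z))

/-- The comorphism of `p ↦ (p, g)`, defined on the points `p` with `x_k(p) ≠ 0` that `g` maps
into `V(J)`. -/
def evalMatrix : IncidenceRing J k →ₐ[MvPolynomial σ 𝕜] Z :=
  aevalTower
    (Algebra.TensorProduct.lift
      (IsLocalization.Away.liftAlgHom (X k) (f := Algebra.ofId (MvPolynomial σ 𝕜) Z) hk)
      (Ideal.Quotient.liftₐ J ((IsScalarTower.toAlgHom 𝕜 (MvPolynomial σ 𝕜) Z).comp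
        (linearSubst g)) fun _ hf ↦ hJ (Ideal.mem_map_of_mem _ hf)) fun _ _ ↦ .all _ _)
    fun q ↦ algebraMap 𝕜 Z (g q.1 q.2)

lemma evalMatrix_imagePoint (f : MvPolynomial σ 𝕜) :
    evalMatrix hk hJ (imagePoint J k f) = algebraMap (MvPolynomial σ 𝕜) Z (linearSubst g f) := by
  rw [imagePoint_apply, evalMatrix, aevalTower_C, Algebra.TensorProduct.lift_tmul, map_one, one_mul]
  rfl

lemma evalMatrix_algebraMap [DecidableEq σ] (p : MvPolynomial (σ × σ) 𝕜) :
    evalMatrix hk hJ (algebraMap (MvPolynomial (σ × σ) 𝕜) (IncidenceRing J k) p) =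
      algebraMap 𝕜 Z (eval (fun q ↦ g q.1 q.2) p) :=
  apply_algebraMap_eq_eval (sum_algebraMap_mul_algebraMap J k) g _ hk
    (fun i ↦ evalMatrix_imagePoint hk hJ (X i))
    (fun j hj i ↦ by rw [algebraMap_entry_of_ne J k ⟨j, hj⟩, evalMatrix, aevalTower_X]) p

lemma map_matrixIdeal_le_ker_evalMatrix [DecidableEq σ] :
    (matrixIdeal g).map (algebraMap (MvPolynomial (σ × σ) 𝕜) (IncidenceRing J k)) ≤
      RingHom.ker (evalMatrix hk hJ) := by
  rw [Ideal.map_le_iff_le_comap]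
  intro p hp
  rw [Ideal.mem_comap, RingHom.mem_ker, evalMatrix_algebraMap, (RingHom.mem_ker).mp hp, map_zero]

end IncidenceRing

end IncidenceVariety

lemma isMaximal_idealOfVars (𝕜 σ : Type*) [Field 𝕜] : (idealOfVars σ 𝕜).IsMaximal := by
  have hker : idealOfVars σ 𝕜 = RingHom.ker (constantCoeff (R := 𝕜) (σ := σ)) := by
    ext f
    simpa [Finsupp.degree_eq_zero_iff, constantCoeff_eq] using mem_pow_idealOfVars_iff' 1 f
  rw [hker]
  exact RingHom.ker_isMaximal_of_surjective _ fun c ↦ ⟨C c, constantCoeff_C _ c⟩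

lemma ringKrullDim_quotient_le_zero_of_pow_X_mem {𝕜 σ : Type*} [Field 𝕜]
    {a : Ideal (MvPolynomial σ 𝕜)} (h : ∀ k, ∃ N : ℕ, X k ^ N ∈ a) :
    ringKrullDim (MvPolynomial σ 𝕜 ⧸ a) ≤ 0 := by
  rw [← Nat.cast_zero, ← Ring.krullDimLE_iff,
    Ideal.krullDimLE_zero_quotient_iff_forall_minimalPrimes_isMaximal]
  intro p hp
  have hle : idealOfVars σ 𝕜 ≤ p := Ideal.span_le.mpr <| by
    rintro _ ⟨k, rfl⟩
    obtain ⟨N, hN⟩ := h k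
    exact hp.1.1.mem_of_pow_mem N (hp.1.2 hN)
  exact (isMaximal_idealOfVars 𝕜 σ).eq_of_le hp.1.1.ne_top hle ▸ isMaximal_idealOfVars 𝕜 σ

section GeneralMatrix

universe u v

variable {𝕜 : Type u} {σ : Type v} [Field 𝕜] [Fintype σ] (I J : Ideal (MvPolynomial σ 𝕜))

open IncidenceRing in
lemma exists_forall_dvd_pow_X_mem_annihilator_tor (k : σ) :
    ∃ F : MvPolynomial (σ × σ) 𝕜, F ≠ 0 ∧ ∀ F', F ∣ F' → ∀ g : Matrix σ σ 𝕜,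
      eval (fun q ↦ g q.1 q.2) F' ≠ 0 → ∀ i, ∃ N : ℕ,
        X k ^ N ∈ Module.annihilator (MvPolynomial σ 𝕜)
          (((Tor (ModuleCat.{max u v} (MvPolynomial σ 𝕜)) (i + 1)).obj
            (ModuleCat.of _ (MvPolynomial σ 𝕜 ⧸ I))).obj
            (ModuleCat.of _ (MvPolynomial σ 𝕜 ⧸ J.map (linearSubst g)))) := by
  classical
  obtain ⟨F₀, hF₀, hflat⟩ := exists_forall_dvd_flat_tensor_and_flat_tensor_tensor
    (S := MvPolynomial σ 𝕜) (A := MvPolynomial (σ × σ) 𝕜) (E := IncidenceRing J k)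
    (MvPolynomial σ 𝕜 ⧸ I)
  refine ⟨F₀, hF₀, fun F hF g hg i ↦ ?_⟩
  obtain ⟨hE, hEI⟩ := hflat F hF
  have hk := isUnit_algebraMap_away_tensor (MvPolynomial σ 𝕜) (X k : MvPolynomial σ 𝕜)
    (MvPolynomial σ 𝕜 ⧸ J.map (linearSubst g))
  have hJ := le_ker_algebraMap_tensor_quotient (Localization.Away (X k : MvPolynomial σ 𝕜))
    (J.map (linearSubst g))
  let ρ := evalMatrix hk hJ
  have hρF : IsUnit (ρ (algebraMap _ (IncidenceRing J k) F)) := by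
    rw [evalMatrix_algebraMap]
    exact (IsUnit.mk0 _ hg).map _
  exact exists_pow_mem_annihilator_tor_of_flat_away
    (map_map_linearSubst_le (sum_algebraMap_mul_algebraMap J k) g (le_ker_imagePoint J k))
    ρ (map_matrixIdeal_le_ker_evalMatrix hk hJ) hρF _ i

theorem krullDim_tor_general_eq_zero_general :
    ∃ F : MvPolynomial (σ × σ) 𝕜, F ≠ 0 ∧ ∀ g : Matrix σ σ 𝕜,
      eval (fun q ↦ g q.1 q.2) F ≠ 0 → ∀ i : ℕ, 0 < i →
        ringKrullDim (MvPolynomial σ 𝕜 ⧸ Module.annihilator (MvPolynomial σ 𝕜)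
          (((Tor (ModuleCat.{max u v} (MvPolynomial σ 𝕜)) i).obj
            (ModuleCat.of _ (MvPolynomial σ 𝕜 ⧸ I))).obj
            (ModuleCat.of _ (MvPolynomial σ 𝕜 ⧸ J.map (linearSubst g))))) ≤ 0 := by
  choose F hF hann using exists_forall_dvd_pow_X_mem_annihilator_tor I J
  refine ⟨∏ k, F k, Finset.prod_ne_zero_iff.mpr fun k _ ↦ hF k, fun g hg i hi ↦ ?_⟩
  obtain ⟨i, rfl⟩ := Nat.exists_eq_succ_of_ne_zero hi.ne'
  exact ringKrullDim_quotient_le_zero_of_pow_X_mem fun k ↦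
    hann k _ (Finset.dvd_prod_of_mem F (Finset.mem_univ k)) g hg i

end GeneralMatrix

/-- **Proposition 2.10** (Miller–Speyer; Caviglia–Murai): for homogeneous ideals
`I, J ⊆ S` and a general change of coordinates `g ∈ GL_n(K)`, the Krull dimension of
`Tor_i(S/I, S/g(J))` (i.e. the Krull dimension of `S/Ann(Tor_i(S/I, S/g(J)))`) is zero
for all `i > 0`. -/
theorem krullDim_tor_general_eq_zero [Infinite K]
    (I J : Ideal (PS K n)) (hI : IsHomog K n I) (hJ : IsHomog K n J) :
    generally K n (fun g => ∀ i : ℕ, 0 < i →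
      ringKrullDim (PS K n ⧸ Module.annihilator (PS K n)
        (((Tor (ModuleCat (PS K n)) i).obj (ModuleCat.of (PS K n) (PS K n ⧸ I))).obj
          (ModuleCat.of (PS K n) (PS K n ⧸ Ideal.map (coordChange K n g) J)))) ≤ 0) :=
  let ⟨F, hF, H⟩ := krullDim_tor_general_eq_zero_general I J
  ⟨F, hF, fun g ↦ H g⟩

end
end
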